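/- arXiv:1111.4050 — 3 statements merged into one kernel-verified Lean document; each statement's English description precedes it below -/
import Mathlib

section
/- A connected simple graph has largest adjacency eigenvalue strictly less than 2 if and only if it is one of the simply-laced Coxeter–Dynkin diagrams A_n, D_n, E_6, E_7, or E_8. -/
/-!
The eigenvalues of the adjacency matrix `A` are all below `2` exactly when the quadratic form
`2 |x|² - xᵀ A x` is positive definite.

For a Dynkin diagram, a strictly positive weight `w` with `A w < 2 w` entrywise exists (the sum of
the positive roots, in coordinates of the simple roots), and a maximum principle
(`eigenvalue_lt_two_of_weight`) turns it into the bound on the eigenvalues.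

Conversely, positive definiteness forbids every subgraph carrying a nonzero weight `f ≥ 0` with
`2 f ≤ A f` (`forbid`); the affine diagrams `Ãₙ`, `D̃ₙ`, `Ẽ₆`, `Ẽ₇`, `Ẽ₈` are such subgraphs. Let
`p 0, …, p m` be a path of maximal length. There are no cycles, so the path is induced, and a vertex
off the path has at most one neighbour on it, which by maximality is not an end. If the path is all
of `G`, this is `Aₙ`. Otherwise some `q` is attached to some `p k`, where `2 k ≤ m` after a reversal
if necessary. A further vertex would be attached either to the path, which produces `D̃ₙ`, or to `q`;
in that case maximality gives `2 ≤ k`, and `Ẽ₆` appears. So `G` is the path together with `q`.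
Excluding `Ẽ₇` gives `k ≤ 2`; `k = 1` is `Dₙ`, and for `k = 2` excluding `Ẽ₈` leaves `E₆`, `E₇`,
`E₈`.
-/

/-- The Dynkin diagram `Dₙ`: a path on the vertices `0, …, n-2` together with
an extra vertex `n-1` joined to the second vertex `1` of the path. -/
def dynkinD (n : ℕ) : SimpleGraph (Fin n) :=
  SimpleGraph.fromRel (fun i j =>
    (j.val = i.val + 1 ∧ j.val ≤ n - 2) ∨ (i.val = 1 ∧ j.val = n - 1))

/-- The exceptional diagram `Eₙ` (for `n = 6, 7, 8`): a path on the vertices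
`0, …, n-2` together with an extra vertex `n-1` joined to the third vertex `2`
of the path. -/
def dynkinE (n : ℕ) : SimpleGraph (Fin n) :=
  SimpleGraph.fromRel (fun i j =>
    (j.val = i.val + 1 ∧ j.val ≤ n - 2) ∨ (i.val = 2 ∧ j.val = n - 1))

section Paths

/-! ### Path sequences in a graph -/

variable {V : Type} {G : SimpleGraph V}

/-- `p 0, …, p m` is a path of length `m` in `G`; values of `p` beyond `m` are irrelevant. -/
structure IsPathSeq (G : SimpleGraph V) (m : ℕ) (p : ℕ → V) : Prop where
  adj : ∀ i < m, G.Adj (p i) (p (i + 1))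
  inj : ∀ i ≤ m, ∀ j ≤ m, p i = p j → i = j

theorem IsPathSeq.reverse {m : ℕ} {p : ℕ → V} (hp : IsPathSeq G m p) :
    IsPathSeq G m (fun i => p (m - i)) where
  adj i hi := by
    have := hp.adj (m - (i + 1)) (by omega)
    rw [show m - (i + 1) + 1 = m - i by omega] at this
    exact this.symm
  inj i hi j hj h := by
    have := hp.inj _ (by omega) _ (by omega) h
    omega

theorem IsPathSeq.shift {m : ℕ} {p : ℕ → V} (hp : IsPathSeq G m p) (a n : ℕ) (h : a + n ≤ m) :
    IsPathSeq G n (fun i => p (a + i)) where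
  adj i hi := hp.adj (a + i) (by omega)
  inj i hi j hj h := by
    have := hp.inj _ (by omega) _ (by omega) h
    omega

theorem IsPathSeq.snoc {m : ℕ} {p : ℕ → V} (hp : IsPathSeq G m p) {q : V}
    (hq : ∀ i ≤ m, p i ≠ q) (ha : G.Adj (p m) q) :
    IsPathSeq G (m + 1) (fun i => if i ≤ m then p i else q) where
  adj i hi := by
    rcases Nat.lt_succ_iff_lt_or_eq.mp hi with h | rfl
    · simpa [h.le, Nat.succ_le_of_lt h] using hp.adj i h
    · simpa using ha
  inj i hi j hj h := by
    split_ifs at h with h1 h2 h2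
    · exact hp.inj i h1 j h2 h
    · exact absurd h (hq i h1)
    · exact absurd h.symm (hq j h2)
    · omega

theorem exists_maximal_path [Finite V] [Nonempty V] (G : SimpleGraph V) :
    ∃ m p, IsPathSeq G m p ∧ ∀ p', ¬ IsPathSeq G (m + 1) p' := by
  classical
  have := Fintype.ofFinite V
  have hb : ∀ m p, IsPathSeq G m p → m ≤ Fintype.card V := fun m p hp => by
    have := Fintype.card_le_of_injective (fun i : Fin (m + 1) => p i) fun i j hij =>
      Fin.ext (hp.inj i (by omega) j (by omega) hij)
    rw [Fintype.card_fin] at this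
    omega
  obtain ⟨v⟩ := ‹Nonempty V›
  have h0 : ∃ p, IsPathSeq G 0 p := ⟨fun _ => v, by simp, by simp⟩
  have hs := Nat.findGreatest_spec (P := fun m => ∃ p, IsPathSeq G m p)
    (Nat.zero_le (Fintype.card V)) h0
  obtain ⟨p, hp⟩ := hs
  refine ⟨_, p, hp, fun p' hp' => ?_⟩
  have := Nat.le_findGreatest (P := fun m => ∃ p, IsPathSeq G m p) (hb _ _ hp') ⟨p', hp'⟩
  omega

/-- A vertex attached to an end of a maximal path would extend the path. -/
theorem one_le_of_maximal {m : ℕ} {p : ℕ → V} (hp : IsPathSeq G m p)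
    (hmax : ∀ p', ¬ IsPathSeq G (m + 1) p') {q : V} (hq : ∀ i ≤ m, p i ≠ q) {k : ℕ}
    (hk : k ≤ m) (hkq : G.Adj (p k) q) : 1 ≤ k ∧ k + 1 ≤ m := by
  constructor
  · by_contra! h0
    obtain rfl : k = 0 := by omega
    exact hmax _ (hp.reverse.snoc (q := q) (fun i hi => hq _ (by omega)) (by simpa using hkq))
  · by_contra! h0
    obtain rfl : k = m := by omega
    exact hmax _ (hp.snoc hq hkq)

/-- If `q` were attached to `p 1`, replacing `p 0` by `q', q` would lengthen the maximal path. -/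
theorem two_le_of_maximal {m : ℕ} {p : ℕ → V} (hp : IsPathSeq G m p)
    (hmax : ∀ p', ¬ IsPathSeq G (m + 1) p') {q q' : V} (hq : ∀ i ≤ m, p i ≠ q)
    (hq' : ∀ i ≤ m, p i ≠ q') {k : ℕ} (hk : k ≤ m) (hkq : G.Adj (p k) q) (hqq : G.Adj q q') :
    2 ≤ k := by
  have h1 := one_le_of_maximal hp hmax hq hk hkq
  by_contra! h0
  obtain rfl : k = 1 := by omega
  have s1 := (hp.shift 1 (m - 1) (by omega)).reverse.snoc (q := q) (fun i hi => hq _ (by omega))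
    (by simpa using hkq)
  have s2 := s1.snoc (q := q') (fun i hi => by
    split_ifs
    · exact hq' _ (by omega)
    · exact hqq.ne) (by simpa using hqq)
  rw [show m - 1 + 1 + 1 = m + 1 by omega] at s2
  exact hmax _ s2

theorem exists_adj_leaving (hc : G.Connected) (S : Set V) {a b : V} (ha : a ∈ S) (hb : b ∉ S) :
    ∃ u ∈ S, ∃ v ∉ S, G.Adj u v := by
  obtain ⟨w⟩ := hc.preconnected a b
  obtain ⟨d, -, h1, h2⟩ := w.exists_boundary_dart S ha hb
  exact ⟨d.fst, h1, d.snd, h2, d.adj⟩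

theorem exists_iso_of_seq {n : ℕ} (H : SimpleGraph (Fin n)) (φ : ℕ → V)
    (hinj : ∀ i < n, ∀ j < n, φ i = φ j → i = j) (hsurj : ∀ v, ∃ i < n, φ i = v)
    (hadj : ∀ i j : Fin n, G.Adj (φ i) (φ j) ↔ H.Adj i j) : Nonempty (G ≃g H) := by
  have hb : Function.Bijective (fun i : Fin n => φ i) :=
    ⟨fun i j hij => Fin.ext (hinj i i.2 j j.2 hij), fun v => by
      obtain ⟨i, hi, rfl⟩ := hsurj v
      exact ⟨⟨i, hi⟩, rfl⟩⟩
  exact ⟨(⟨Equiv.ofBijective _ hb, fun {i j} => hadj i j⟩ : H ≃g G).symm⟩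

end Paths

section Spectrum

variable {V : Type} [Fintype V] [DecidableEq V] (G : SimpleGraph V) [DecidableRel G.Adj]

/-! ### Dynkin diagrams have eigenvalues below two -/

/-- A positive weight `w` with `A w < 2 w` entrywise forces every eigenvalue below `2`: compare both
sides of the eigenvector equation at a vertex maximising `|x v| / w v`. -/
theorem eigenvalue_lt_two_of_weight (w : V → ℝ) (hw : ∀ v, 0 < w v)
    (h : ∀ v, ∑ u ∈ G.neighborFinset v, w u < 2 * w v) (μ : ℝ)
    (hμ : Module.End.HasEigenvalue (Matrix.toLin' (G.adjMatrix ℝ)) μ) : μ < 2 := by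
  obtain ⟨x, hx, hx0⟩ := hμ.exists_hasEigenvector
  rw [Module.End.mem_eigenspace_iff, Matrix.toLin'_apply] at hx
  obtain ⟨v₀, hv₀⟩ := Function.ne_iff.mp hx0
  have : Nonempty V := ⟨v₀⟩
  obtain ⟨v, hv⟩ := Finite.exists_max (fun v => |x v| / w v)
  set c := |x v| / w v with hc
  have hcpos : 0 < c := lt_of_lt_of_le (div_pos (abs_pos.mpr hv₀) (hw v₀)) (hv v₀)
  have hxv : |x v| = c * w v := by rw [hc, div_mul_cancel₀ _ (hw v).ne']
  have hle : ∀ u, |x u| ≤ c * w u := fun u => (div_le_iff₀ (hw u)).mp (hv u)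
  by_contra! h2
  have h1 : μ * x v = ∑ u ∈ G.neighborFinset v, x u := by
    have := congrFun hx v
    rw [SimpleGraph.adjMatrix_mulVec_apply] at this
    simpa using this.symm
  have h3 : μ * |x v| ≤ c * ∑ u ∈ G.neighborFinset v, w u := by
    calc μ * |x v| = |∑ u ∈ G.neighborFinset v, x u| := by
          rw [← h1, abs_mul, abs_of_nonneg (a := μ) (by linarith)]
      _ ≤ ∑ u ∈ G.neighborFinset v, |x u| := Finset.abs_sum_le_sum_abs _ _
      _ ≤ ∑ u ∈ G.neighborFinset v, c * w u := Finset.sum_le_sum fun u _ => hle u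
      _ = _ := by rw [Finset.mul_sum]
  have h4 := mul_lt_mul_of_pos_left (h v) hcpos
  have h5 : 2 * |x v| ≤ μ * |x v| := mul_le_mul_of_nonneg_right h2 (abs_nonneg _)
  rw [hxv] at h3 h5
  linarith

/-- The weight criterion read off a model graph on `Fin n`. The set `nb i` only has to contain the
neighbours of `i`; positivity of `W` on `i < n` is a consequence of `hW`. -/
theorem eigenvalue_lt_two_of_iso {n : ℕ} {H : SimpleGraph (Fin n)} (e : G ≃g H) (W : ℕ → ℕ)
    (nb : ℕ → Finset ℕ) (hnb : ∀ i j : Fin n, H.Adj i j → j.val ∈ nb i.val)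
    (hW : ∀ i < n, ∑ k ∈ nb i, W k < 2 * W i) (μ : ℝ)
    (hμ : Module.End.HasEigenvalue (Matrix.toLin' (G.adjMatrix ℝ)) μ) : μ < 2 := by
  refine eigenvalue_lt_two_of_weight G (fun v => (W (e v) : ℝ)) (fun v => ?_) (fun v => ?_) μ hμ
  · have := hW (e v) (e v).2
    have : 0 < W (e v) := by omega
    exact_mod_cast this
  · have h1 : ∑ u ∈ G.neighborFinset v, W (e u) ≤ ∑ k ∈ nb (e v), W k := by
      rw [← Finset.sum_image (s := G.neighborFinset v) (g := fun u => (e u).val) (f := W)]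
      · refine Finset.sum_le_sum_of_subset fun k hk => ?_
        obtain ⟨u, hu, rfl⟩ := Finset.mem_image.mp hk
        exact hnb _ _ (e.map_adj_iff.mpr (by simpa using hu))
      · intro a _ b _ hab
        exact e.injective (Fin.ext hab)
    have := lt_of_le_of_lt h1 (hW (e v) (e v).2)
    exact_mod_cast this

/-- The weight `w` satisfies `2 w - A w = 2`: it is the sum of the positive roots of `Aₙ` in the basis
of simple roots. -/
theorem eigenvalue_lt_two_path {n : ℕ} (e : G ≃g SimpleGraph.pathGraph n) (μ : ℝ)
    (hμ : Module.End.HasEigenvalue (Matrix.toLin' (G.adjMatrix ℝ)) μ) : μ < 2 := by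
  refine eigenvalue_lt_two_of_iso G e (fun i => (i + 1) * (n - i))
    (fun i => if i = 0 then {1} else {i - 1, i + 1}) (fun i j h => ?_) (fun i hi => ?_) μ hμ
  · rw [SimpleGraph.pathGraph_adj] at h
    split_ifs <;> simp <;> omega
  · obtain ⟨t, rfl⟩ : ∃ t, n = i + 1 + t := ⟨n - i - 1, by omega⟩
    rcases i with _ | i
    · simp only [if_true, Finset.sum_singleton]
      have : 0 + 1 + t - 1 = t := by omega
      have h' : 0 + 1 + t - 0 = t + 1 := by omega
      rw [this, h']
      nlinarith
    · rw [if_neg (by omega), Finset.sum_pair (by omega)]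
      have h1 : i + 1 + 1 + t - (i + 1 - 1) = t + 2 := by omega
      have h2 : i + 1 + 1 + t - (i + 1 + 1) = t := by omega
      have h3 : i + 1 + 1 + t - (i + 1) = t + 1 := by omega
      have h4 : i + 1 - 1 = i := by omega
      rw [h1, h2, h3, h4]
      nlinarith

/-- The weight is twice the sum of the positive roots of `Dₙ` in the basis of simple roots, the
factor clearing denominators. -/
theorem eigenvalue_lt_two_dynkinD {n : ℕ} (hn : 4 ≤ n) (e : G ≃g dynkinD n) (μ : ℝ)
    (hμ : Module.End.HasEigenvalue (Matrix.toLin' (G.adjMatrix ℝ)) μ) : μ < 2 := by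
  refine eigenvalue_lt_two_of_iso G e
    (fun i => if i = 0 ∨ i = n - 1 then n * (n - 1) else 2 * ((n - 1 - i) * (n + i)))
    (fun i => if i = 0 ∨ i = n - 1 then {1} else if i = 1 then {0, 2, n - 1} else
      if i = n - 2 then {n - 3} else {i - 1, i + 1})
    (fun i j h => ?_) (fun i hi => ?_) μ hμ
  · simp only [dynkinD, SimpleGraph.fromRel_adj] at h
    split_ifs <;> simp <;> omega
  · obtain ⟨n, rfl⟩ : ∃ m, n = m + 4 := ⟨n - 4, by omega⟩
    have e1 : n + 4 - 1 = n + 3 := rfl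
    have e2 : n + 4 - 2 = n + 2 := rfl
    have e3 : n + 4 - 3 = n + 1 := rfl
    rw [e1, e2, e3]
    by_cases h0 : i = 0 ∨ i = n + 3
    · rw [if_pos h0, if_pos h0, Finset.sum_singleton, if_neg (by omega)]
      have : n + 3 - 1 = n + 2 := rfl
      rw [this]; nlinarith
    by_cases h1 : i = 1
    · subst h1
      rw [if_neg h0, if_neg h0, if_pos rfl, Finset.sum_insert (by simp),
        Finset.sum_pair (by omega), if_pos (Or.inl rfl),
        if_neg (show ¬(2 = 0 ∨ 2 = n + 3) by omega), if_pos (Or.inr rfl)]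
      have a1 : n + 3 - 1 = n + 2 := rfl
      have a2 : n + 3 - 2 = n + 1 := rfl
      rw [a1, a2]; nlinarith
    by_cases h2 : i = n + 2
    · subst h2
      rw [if_neg h0, if_neg h0, if_neg h1, if_pos rfl,
        Finset.sum_singleton, if_neg (show ¬(n + 1 = 0 ∨ n + 1 = n + 3) by omega)]
      have a1 : n + 3 - (n + 2) = 1 := by omega
      have a2 : n + 3 - (n + 1) = 2 := by omega
      rw [a1, a2]; nlinarith
    · rw [if_neg h0, if_neg h0, if_neg h1, if_neg h2,
        Finset.sum_pair (by omega), if_neg (by omega), if_neg (by omega)]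
      obtain ⟨i, rfl⟩ : ∃ j, i = j + 2 := ⟨i - 2, by omega⟩
      obtain ⟨t, rfl⟩ : ∃ t, n = i + t + 1 := ⟨n - i - 1, by omega⟩
      have a1 : i + t + 1 + 3 - (i + 2 - 1) = t + 3 := by omega
      have a2 : i + t + 1 + 3 - (i + 2 + 1) = t + 1 := by omega
      have a3 : i + t + 1 + 3 - (i + 2) = t + 2 := by omega
      have a4 : i + 2 - 1 = i + 1 := by omega
      rw [a1, a2, a3, a4]; nlinarith

/-- The weights are the sums of the positive roots of `E₆`, `E₇`, `E₈` in the basis of simple roots. -/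
theorem eigenvalue_lt_two_dynkinE {n : ℕ} (hn : n = 6 ∨ n = 7 ∨ n = 8) (e : G ≃g dynkinE n)
    (μ : ℝ) (hμ : Module.End.HasEigenvalue (Matrix.toLin' (G.adjMatrix ℝ)) μ) : μ < 2 := by
  refine eigenvalue_lt_two_of_iso G e
    (fun i => (if n = 6 then [16, 30, 42, 30, 16, 22] else
      if n = 7 then [34, 66, 96, 75, 52, 27, 49] else
        [92, 182, 270, 220, 168, 114, 58, 136]).getD i 0)
    (fun i => (Finset.range n).filter fun j =>
      (j = i + 1 ∧ j ≤ n - 2) ∨ (i = 2 ∧ j = n - 1) ∨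
      (i = j + 1 ∧ i ≤ n - 2) ∨ (j = 2 ∧ i = n - 1))
    (fun i j h => ?_) ?_ μ hμ
  · simp only [dynkinE, SimpleGraph.fromRel_adj] at h
    simp only [Finset.mem_filter, Finset.mem_range]
    have := j.2
    omega
  · rcases hn with rfl | rfl | rfl <;> decide

/-! ### Positive definiteness and excluded subgraphs -/

/-- The quadratic form `2 |x|² - xᵀ A x` is positive definite. -/
abbrev QuadFormLT : Prop :=
  ∀ x : V → ℝ, x ≠ 0 → x ⬝ᵥ (G.adjMatrix ℝ).mulVec x < 2 * (x ⬝ᵥ x)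

theorem quadForm_lt (h : ∀ μ : ℝ,
      Module.End.HasEigenvalue (Matrix.toLin' (G.adjMatrix ℝ)) μ → μ < 2) :
    QuadFormLT G := by
  intro x hx
  have hA : ((2 : ℝ) • (1 : Matrix V V ℝ) - G.adjMatrix ℝ).IsHermitian := by
    ext i j
    simp [Matrix.one_apply, SimpleGraph.adjMatrix_apply, G.adj_comm, eq_comm]
  have hp : ((2 : ℝ) • (1 : Matrix V V ℝ) - G.adjMatrix ℝ).PosDef := by
    rw [hA.posDef_iff_eigenvalues_pos]
    intro i
    have h1 := hA.mulVec_eigenvectorBasis i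
    have h2 : (2 - hA.eigenvalues i) < 2 := by
      apply h
      apply Module.End.hasEigenvalue_of_hasEigenvector
        (x := (hA.eigenvectorBasis i).ofLp)
      refine ⟨?_, fun h0 => hA.eigenvectorBasis.orthonormal.ne_zero i ?_⟩
      · rw [Module.End.mem_eigenspace_iff, Matrix.toLin'_apply]
        rw [Matrix.sub_mulVec, Matrix.smul_mulVec, Matrix.one_mulVec] at h1
        rw [sub_smul, ← h1]; abel
      · ext v; exact congrFun h0 v
    linarith
  have := hp.dotProduct_mulVec_pos hx
  rw [Matrix.sub_mulVec, Matrix.smul_mulVec, Matrix.one_mulVec, dotProduct_sub,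
    dotProduct_smul] at this
  simp only [star_trivial, smul_eq_mul] at this
  linarith

/-- A subgraph (not necessarily induced) of `G` carrying a nonzero weight `f ≥ 0` with
`2 f ≤ A f` entrywise contradicts `QuadFormLT G`: extend `f` by zero to `G`. The subgraph has vertices
`φ 0, …, φ (N - 1)`, and `nb i` is a set of indices of neighbours of `φ i`. -/
theorem forbid (h : QuadFormLT G)
    (N : ℕ) (φ : ℕ → V) (hφ : ∀ i < N, ∀ j < N, φ i = φ j → i = j) (f : ℕ → ℕ)
    (nb : ℕ → Finset ℕ) (hnb : ∀ i < N, ∀ j ∈ nb i, j < N ∧ G.Adj (φ i) (φ j))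
    (hf : ∀ i < N, 2 * f i ≤ ∑ j ∈ nb i, f j) (i₀ : ℕ) (hi₀ : i₀ < N) (h0 : 0 < f i₀) :
    False := by
  set x : V → ℝ := fun v => ∑ i ∈ Finset.range N, if φ i = v then (f i : ℝ) else 0 with hx
  have hxφ : ∀ i < N, x (φ i) = f i := by
    intro i hi
    rw [hx]
    dsimp only
    rw [Finset.sum_eq_single i]
    · simp
    · intro j hj hji
      rw [if_neg fun e => hji (hφ j (by simpa using hj) i hi e)]
    · intro hh; exact absurd (Finset.mem_range.mpr hi) hh
  have hx_nonneg : ∀ v, 0 ≤ x v := fun v => Finset.sum_nonneg fun i _ => by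
    split_ifs <;> positivity
  have hne : x ≠ 0 := fun e => by
    have := hxφ i₀ hi₀
    rw [e] at this
    have h1 : (f i₀ : ℝ) = 0 := this.symm
    have h2 : f i₀ = 0 := by exact_mod_cast h1
    omega
  refine absurd (h x hne) (not_lt.mpr ?_)
  simp only [dotProduct, Finset.mul_sum]
  refine Finset.sum_le_sum fun v _ => ?_
  rw [SimpleGraph.adjMatrix_mulVec_apply]
  by_cases hv : ∃ i < N, φ i = v
  · obtain ⟨i, hi, rfl⟩ := hv
    -- Neighbours outside the subgraph only increase the sum, as `x ≥ 0`.
    have h1 : (∑ j ∈ nb i, (f j : ℝ)) ≤ ∑ u ∈ G.neighborFinset (φ i), x u := by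
      calc (∑ j ∈ nb i, (f j : ℝ)) = ∑ j ∈ nb i, x (φ j) :=
            Finset.sum_congr rfl fun j hj => (hxφ j (hnb i hi j hj).1).symm
        _ = ∑ u ∈ (nb i).image φ, x u := by
            rw [Finset.sum_image]
            intro a ha b hb hab
            exact hφ a (hnb i hi a ha).1 b (hnb i hi b hb).1 hab
        _ ≤ _ := by
            refine Finset.sum_le_sum_of_subset_of_nonneg (fun u hu => ?_) fun u _ _ => hx_nonneg u
            obtain ⟨j, hj, rfl⟩ := Finset.mem_image.mp hu
            simpa using (hnb i hi j hj).2
    have h2 : (2 * f i : ℝ) ≤ ∑ j ∈ nb i, (f j : ℝ) := by exact_mod_cast hf i hi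
    have := hx_nonneg (φ i)
    have h3 := hxφ i hi
    nlinarith
  · have : x v = 0 := Finset.sum_eq_zero fun i hi => by
      rw [if_neg fun e => hv ⟨i, by simpa using hi, e⟩]
    simp [this]

variable {G}

/-- Cycles are excluded by the constant weight (the affine diagrams `Ãₙ`). -/
theorem not_cycle (h : QuadFormLT G) {m : ℕ} {p : ℕ → V} (hp : IsPathSeq G m p) (hm : 2 ≤ m) :
    ¬ G.Adj (p m) (p 0) := by
  intro hc
  refine forbid G h (m + 1) p (fun i hi j hj => hp.inj i (by omega) j (by omega)) (fun _ => 1)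
    (fun i => if i = 0 then {1, m} else if i = m then {m - 1, 0} else {i - 1, i + 1})
    (fun i hi j hj => ?_) (fun i hi => ?_) 0 (by omega) one_pos
  · split_ifs at hj with h0 h1 <;> simp only [Finset.mem_insert, Finset.mem_singleton] at hj
    · subst h0
      rcases hj with rfl | rfl
      · exact ⟨by omega, hp.adj 0 (by omega)⟩
      · exact ⟨by omega, hc.symm⟩
    · subst h1
      rcases hj with rfl | rfl
      · have := hp.adj (i - 1) (by omega)
        rw [Nat.sub_add_cancel (by omega)] at this
        exact ⟨by omega, this.symm⟩
      · exact ⟨by omega, hc⟩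
    · rcases hj with rfl | rfl
      · have := hp.adj (i - 1) (by omega)
        rw [Nat.sub_add_cancel (by omega)] at this
        exact ⟨by omega, this.symm⟩
      · exact ⟨by omega, hp.adj i (by omega)⟩
  · split_ifs <;> rw [Finset.sum_pair (by omega)]

theorem not_chord (h : QuadFormLT G) {m : ℕ} {p : ℕ → V} (hp : IsPathSeq G m p) {i j : ℕ}
    (hij : i + 2 ≤ j) (hj : j ≤ m) : ¬ G.Adj (p i) (p j) := by
  intro ha
  refine not_cycle h (hp.shift i (j - i) (by omega)) (by omega) ?_
  rw [show i + (j - i) = j by omega]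
  exact ha.symm

theorem adj_iff_of_isPathSeq (h : QuadFormLT G) {m : ℕ} {p : ℕ → V} (hp : IsPathSeq G m p)
    {i j : ℕ} (hi : i ≤ m) (hj : j ≤ m) :
    G.Adj (p i) (p j) ↔ (j = i + 1 ∨ i = j + 1) := by
  constructor
  · intro ha
    by_contra! hne
    rcases lt_trichotomy i j with hlt | rfl | hlt
    · exact not_chord h hp (by omega) hj ha
    · exact G.loopless.irrefl _ ha
    · exact not_chord h hp (by omega) hi ha.symm
  · rintro (rfl | rfl)
    · exact hp.adj i (by omega)
    · exact (hp.adj j (by omega)).symm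

/-- A vertex off a path has at most one neighbour on it, for otherwise a cycle appears. -/
theorem attach_unique (h : QuadFormLT G) {m : ℕ} {p : ℕ → V} (hp : IsPathSeq G m p) {q : V}
    (hq : ∀ i ≤ m, p i ≠ q) {k l : ℕ} (hk : k ≤ m) (hl : l ≤ m) (hkq : G.Adj (p k) q)
    (hlq : G.Adj (p l) q) : k = l := by
  wlog hkl : k < l generalizing k l
  · by_contra hne
    exact hne (this hl hk hlq hkq (by omega)).symm
  exfalso
  have hs := (hp.shift k (l - k) (by omega)).snoc (q := q) (fun i hi => hq _ (by omega))
    (by simpa [show k + (l - k) = l by omega] using hlq)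
  refine not_cycle h hs (by omega) ?_
  simpa using hkq.symm

/-- Two distinct vertices `q`, `q'` off a path cannot both be attached to interior vertices of it:
together with the stretch of the path from `k - 1` to `l + 1` they form an affine diagram `D̃ₙ`. Its
weight is `2` on `p k, …, p l` and `1` on the four end vertices; `q` and `q'` get the indices `m + 1`
and `m + 2`. -/
theorem forbid_fork (h : QuadFormLT G) {m : ℕ} {p : ℕ → V} (hp : IsPathSeq G m p) {q q' : V}
    (hq : ∀ i ≤ m, p i ≠ q) (hq' : ∀ i ≤ m, p i ≠ q') (hqq : q ≠ q') {k l : ℕ} (hk : 1 ≤ k)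
    (hkl : k ≤ l) (hl : l + 1 ≤ m) (hkq : G.Adj (p k) q) (hlq : G.Adj (p l) q') : False := by
  obtain ⟨φ, hφ, hφq, hφq'⟩ : ∃ φ : ℕ → V,
      (∀ i ≤ m, φ i = p i) ∧ φ (m + 1) = q ∧ φ (m + 2) = q' :=
    ⟨fun i => if i ≤ m then p i else if i = m + 1 then q else q', by simp +contextual, by simp,
      by simp⟩
  have hcase : ∀ i < m + 3, i ≤ m ∨ i = m + 1 ∨ i = m + 2 := by omega
  refine forbid G h (m + 3) φ (fun i hi j hj hij => ?_)
    (fun i => if k ≤ i ∧ i ≤ l then 2 else if i + 1 = k ∨ i = l + 1 ∨ m < i then 1 else 0)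
    (fun i => if k ≤ i ∧ i ≤ l then
        {i - 1, i + 1} ∪ ((if i = k then {m + 1} else ∅) ∪ (if i = l then {m + 2} else ∅))
      else if i + 1 = k ∨ i = m + 1 then {k} else if i = l + 1 ∨ i = m + 2 then {l} else ∅)
    (fun i hi j hj => ?_) (fun i hi => ?_) k (by omega) (by simp [hkl])
  · rcases hcase i hi with h1 | rfl | rfl <;> rcases hcase j hj with h2 | rfl | rfl
    · rw [hφ i h1, hφ j h2] at hij
      exact hp.inj _ h1 _ h2 hij
    · rw [hφ i h1, hφq] at hij
      exact absurd hij (hq _ h1)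
    · rw [hφ i h1, hφq'] at hij
      exact absurd hij (hq' _ h1)
    · rw [hφ j h2, hφq] at hij
      exact absurd hij.symm (hq _ h2)
    · rfl
    · rw [hφq, hφq'] at hij
      exact absurd hij hqq
    · rw [hφ j h2, hφq'] at hij
      exact absurd hij.symm (hq' _ h2)
    · rw [hφq, hφq'] at hij
      exact absurd hij.symm hqq
    · rfl
  · have key : (i ≤ m ∧ j ≤ m ∧ (j = i + 1 ∨ i = j + 1)) ∨ (i = k ∧ j = m + 1) ∨
        (i = l ∧ j = m + 2) ∨ (i = m + 1 ∧ j = k) ∨ (i = m + 2 ∧ j = l) := by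
      split_ifs at hj <;>
        simp only [Finset.mem_union, Finset.mem_insert, Finset.mem_singleton,
          Finset.notMem_empty, or_false, false_or] at hj <;> omega
    rcases key with ⟨hi', hj', rfl | rfl⟩ | ⟨rfl, rfl⟩ | ⟨rfl, rfl⟩ | ⟨rfl, rfl⟩ | ⟨rfl, rfl⟩
    · rw [hφ _ hi', hφ _ hj']
      exact ⟨by omega, hp.adj i (by omega)⟩
    · rw [hφ _ hi', hφ _ hj']
      exact ⟨by omega, (hp.adj j (by omega)).symm⟩
    · rw [hφ i (by omega), hφq]
      exact ⟨by omega, hkq⟩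
    · rw [hφ i (by omega), hφq']
      exact ⟨by omega, hlq⟩
    · rw [hφ j (by omega), hφq]
      exact ⟨by omega, hkq.symm⟩
    · rw [hφ j (by omega), hφq']
      exact ⟨by omega, hlq.symm⟩
  · by_cases h1 : k ≤ i ∧ i ≤ l
    · rw [if_pos h1, if_pos h1, Finset.sum_union, Finset.sum_union,
        Finset.sum_pair (by omega)]
      · have e1 : (if i = k then 1 else 0) ≤ ∑ j ∈ (if i = k then {m + 1} else ∅ : Finset ℕ),
          if k ≤ j ∧ j ≤ l then 2 else if j + 1 = k ∨ j = l + 1 ∨ m < j then 1 else 0 := by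
          split_ifs with h2
          · rw [Finset.sum_singleton, if_neg (by omega), if_pos (by omega)]
          · simp
        have e2 : (if i = l then 1 else 0) ≤ ∑ j ∈ (if i = l then {m + 2} else ∅ : Finset ℕ),
          if k ≤ j ∧ j ≤ l then 2 else if j + 1 = k ∨ j = l + 1 ∨ m < j then 1 else 0 := by
          split_ifs with h2
          · rw [Finset.sum_singleton, if_neg (by omega), if_pos (by omega)]
          · simp
        refine le_trans ?_ (Nat.add_le_add_left (Nat.add_le_add e1 e2) _)
        clear e1 e2
        split_ifs <;> omega
      · split_ifs <;> simp
      · split_ifs <;> simp <;> omega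
    · rw [if_neg h1, if_neg h1]
      split_ifs
      all_goals first
        | (exfalso; omega)
        | rw [Finset.sum_singleton, if_pos (by omega)]
        | simp

/-- Adjacency in the path `0, …, m` with an extra vertex `m + 1` joined to `k`. -/
def armRel (m k i j : ℕ) : Prop :=
  (j = i + 1 ∧ j ≤ m) ∨ (i = k ∧ j = m + 1) ∨ (i = j + 1 ∧ i ≤ m) ∨ (j = k ∧ i = m + 1)

instance (m k i j : ℕ) : Decidable (armRel m k i j) := by unfold armRel; infer_instance

/-- The instance of `forbid` for a path with one extra vertex `q` attached, `q` having index `m + 1`. -/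
theorem forbid_arm (h : QuadFormLT G) {m : ℕ} {p : ℕ → V} (hp : IsPathSeq G m p) {q : V}
    (hq : ∀ i ≤ m, p i ≠ q) {k : ℕ} (hk : k ≤ m) (hkq : G.Adj (p k) q) (f : ℕ → ℕ)
    (hf : ∀ i < m + 2, 2 * f i ≤ ∑ j ∈ (Finset.range (m + 2)).filter (armRel m k i), f j)
    (h0 : 0 < f 0) : False := by
  refine forbid G h (m + 2) (fun i => if i ≤ m then p i else q)
    (fun i hi j hj hij => ?_) f
    (fun i => (Finset.range (m + 2)).filter (armRel m k i))
    (fun i hi j hj => ?_) hf 0 (by omega) h0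
  · split_ifs at hij with h1 h2 h3
    · exact hp.inj _ h1 _ h2 hij
    · exact absurd hij (hq _ h1)
    · exact absurd hij.symm (hq _ h3)
    · omega
  · rw [Finset.mem_filter, Finset.mem_range] at hj
    refine ⟨hj.1, ?_⟩
    rcases hj.2 with ⟨rfl, h2⟩ | ⟨rfl, rfl⟩ | ⟨rfl, h2⟩ | ⟨rfl, rfl⟩
    · rw [if_pos (by omega), if_pos h2]; exact hp.adj i (by omega)
    · rw [if_pos hk, if_neg (by omega)]; exact hkq
    · rw [if_pos h2, if_pos (by omega)]; exact (hp.adj j (by omega)).symm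
    · rw [if_pos hk, if_neg (by omega)]; exact hkq.symm

/-- The affine diagram `Ẽ₇`: arms of lengths `3, 3, 1`. -/
theorem forbid_E7 (h : QuadFormLT G) {m : ℕ} {p : ℕ → V} (hp : IsPathSeq G m p) {q : V}
    (hq : ∀ i ≤ m, p i ≠ q) {k : ℕ} (hk : 3 ≤ k) (hk' : k + 3 ≤ m) (hkq : G.Adj (p k) q) :
    False := by
  refine forbid_arm h (hp.shift (k - 3) 6 (by omega)) (q := q) (fun i hi => hq _ (by omega))
    (k := 3) (by omega) ?_ (fun i => [1, 2, 3, 4, 3, 2, 1, 2].getD i 0) (by decide) (by decide)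
  rwa [show k - 3 + 3 = k by omega]

/-- The affine diagram `Ẽ₈`: arms of lengths `2, 5, 1`. -/
theorem forbid_E8 (h : QuadFormLT G) {m : ℕ} {p : ℕ → V} (hp : IsPathSeq G m p) {q : V}
    (hq : ∀ i ≤ m, p i ≠ q) (hm : 7 ≤ m) (hkq : G.Adj (p 2) q) : False :=
  forbid_arm h (hp.shift 0 7 (by omega)) (q := q) (fun i hi => hq _ (by omega))
    (k := 2) (by omega) hkq (fun i => [2, 4, 6, 5, 4, 3, 2, 1, 3].getD i 0) (by decide) (by decide)

/-- The affine diagram `Ẽ₆`: arms of lengths `2, 2, 2`, the third consisting of `q` and its neighbour. -/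
theorem forbid_E6 (h : QuadFormLT G) {m : ℕ} {p : ℕ → V} (hp : IsPathSeq G m p) {q q' : V}
    (hq : ∀ i ≤ m, p i ≠ q) (hq' : ∀ i ≤ m, p i ≠ q') {k : ℕ} (hk : 2 ≤ k) (hk' : k + 2 ≤ m)
    (hkq : G.Adj (p k) q) (hqq : G.Adj q q') : False := by
  refine forbid G h 7 (fun i => if i ≤ 4 then p (k - 2 + i) else if i = 5 then q else q')
    (fun i hi j hj hij => ?_) (fun i => [1, 2, 3, 2, 1, 2, 1].getD i 0)
    (fun i => (Finset.range 7).filter fun j =>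
      armRel 4 2 i j ∨ (i = 5 ∧ j = 6) ∨ (i = 6 ∧ j = 5))
    (fun i hi j hj => ?_) (by decide) 0 (by omega) (by decide)
  · split_ifs at hij with h1 h2 h3 h4 h5 h6 h7 h8
    · have := hp.inj _ (by omega) _ (by omega) hij
      omega
    · exact absurd hij (hq _ (by omega))
    · exact absurd hij (hq' _ (by omega))
    · exact absurd hij.symm (hq _ (by omega))
    · omega
    · exact absurd hij hqq.ne
    · exact absurd hij.symm (hq' _ (by omega))
    · exact absurd hij.symm hqq.ne
    · omega
  · rw [Finset.mem_filter, Finset.mem_range] at hj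
    refine ⟨hj.1, ?_⟩
    have hk2 : k - 2 + 2 = k := by omega
    rcases hj.2 with (⟨rfl, h2⟩ | ⟨rfl, rfl⟩ | ⟨rfl, h2⟩ | ⟨rfl, rfl⟩) | ⟨rfl, rfl⟩ | ⟨rfl, rfl⟩
    · rw [if_pos (by omega), if_pos h2]; exact hp.adj (k - 2 + i) (by omega)
    · simpa [hk2] using hkq
    · rw [if_pos h2, if_pos (by omega)]; exact (hp.adj (k - 2 + j) (by omega)).symm
    · simpa [hk2] using hkq.symm
    · simpa using hqq
    · simpa using hqq.symm

/-! ### The classification -/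

/-- The path `0, …, n - 2` with an extra vertex `n - 1` joined to `k`. The diagrams `dynkinD n` and
`dynkinE n` are the cases `k = 1` and `k = 2`, definitionally. -/
def pathWithArm (n k : ℕ) : SimpleGraph (Fin n) :=
  SimpleGraph.fromRel (fun i j =>
    (j.val = i.val + 1 ∧ j.val ≤ n - 2) ∨ (i.val = k ∧ j.val = n - 1))

theorem iso_pathWithArm (h : QuadFormLT G) {m : ℕ} {p : ℕ → V} (hp : IsPathSeq G m p) {q : V}
    (hq : ∀ i ≤ m, p i ≠ q) {k : ℕ} (hk : k ≤ m) (hkq : G.Adj (p k) q)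
    (hall : ∀ v, (∃ i ≤ m, p i = v) ∨ v = q) : Nonempty (G ≃g pathWithArm (m + 2) k) := by
  have hqadj : ∀ i ≤ m, G.Adj (p i) q ↔ i = k := fun i hi =>
    ⟨fun ha => attach_unique h hp hq hi hk ha hkq, fun e => e ▸ hkq⟩
  refine exists_iso_of_seq _ (fun i => if i ≤ m then p i else q) (fun i hi j hj hij => ?_)
    (fun v => ?_) (fun i j => ?_)
  · split_ifs at hij with h1 h2 h3
    · exact hp.inj _ h1 _ h2 hij
    · exact absurd hij (hq _ h1)
    · exact absurd hij.symm (hq _ h3)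
    · omega
  · rcases hall v with ⟨i, hi, rfl⟩ | rfl
    · exact ⟨i, by omega, by simp [hi]⟩
    · exact ⟨m + 1, by omega, by simp⟩
  · have hi := i.2
    have hj := j.2
    simp only [pathWithArm, SimpleGraph.fromRel_adj, ne_eq, Fin.ext_iff]
    split_ifs with h1 h2 h2
    · rw [adj_iff_of_isPathSeq h hp h1 h2]; omega
    · rw [hqadj _ h1]; omega
    · rw [G.adj_comm, hqadj _ h2]; omega
    · simp only [G.loopless.irrefl, false_iff]; omega

/-- Take a path `p` of maximal length and, if it misses a vertex, a vertex `q` attached to it. The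
excluded diagrams leave no room for a further vertex and bound the position of `q`. -/
theorem classification (hc : G.Connected) (h : QuadFormLT G) :
    (∃ n : ℕ, Nonempty (G ≃g SimpleGraph.pathGraph n)) ∨
       (∃ n : ℕ, 4 ≤ n ∧ Nonempty (G ≃g dynkinD n)) ∨
       Nonempty (G ≃g dynkinE 6) ∨
       Nonempty (G ≃g dynkinE 7) ∨
       Nonempty (G ≃g dynkinE 8) := by
  have := hc.nonempty
  obtain ⟨m, p, hp, hmax⟩ := exists_maximal_path G
  by_cases hS : ∀ v, ∃ i ≤ m, p i = v
  · refine Or.inl ⟨m + 1, exists_iso_of_seq _ p (fun i hi j hj => hp.inj i (by omega) j (by omega))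
      (fun v => ?_) fun i j => ?_⟩
    · obtain ⟨i, hi, e⟩ := hS v
      exact ⟨i, by omega, e⟩
    · rw [adj_iff_of_isPathSeq h hp (by omega) (by omega), SimpleGraph.pathGraph_adj]
      omega
  refine Or.inr ?_
  push Not at hS
  obtain ⟨b, hb⟩ := hS
  obtain ⟨u, ⟨k, hk, rfl⟩, q, hq, hkq⟩ := exists_adj_leaving hc {v | ∃ i ≤ m, p i = v}
    (a := p 0) (b := b) ⟨0, by omega, rfl⟩ (by simpa using hb)
  replace hq : ∀ i ≤ m, p i ≠ q := by simpa using hq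
  clear hb b
  -- Reversing the path puts the attaching vertex in its first half.
  wlog hkm : 2 * k ≤ m generalizing p k
  · exact this _ hp.reverse (m - k) (by omega) (by rwa [show m - (m - k) = k by omega])
      (fun i hi => hq _ (by omega)) (by omega)
  have hk1 := one_le_of_maximal hp hmax hq hk hkq
  -- A further vertex would be attached to the path, giving `D̃ₙ`, or to `q`, giving `Ẽ₆`.
  have hall : ∀ v, (∃ i ≤ m, p i = v) ∨ v = q := by
    by_contra! hcon
    obtain ⟨b, hb, hbq⟩ := hcon
    obtain ⟨u, hu, q', hq', huq⟩ := exists_adj_leaving hc {v | (∃ i ≤ m, p i = v) ∨ v = q}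
      (a := q) (b := b) (Or.inr rfl) (by simpa using ⟨hb, hbq⟩)
    simp only [Set.mem_ofPred_eq, not_or, not_exists, not_and] at hq'
    obtain ⟨hq', hqq⟩ := hq'
    rcases hu with ⟨l, hl, rfl⟩ | rfl
    · have hl1 := one_le_of_maximal hp hmax hq' hl huq
      rcases le_total k l with hkl | hkl
      · exact forbid_fork h hp hq hq' (Ne.symm hqq) hk1.1 hkl hl1.2 hkq huq
      · exact forbid_fork h hp hq' hq hqq hl1.1 hkl hk1.2 huq hkq
    · have hk2 := two_le_of_maximal hp hmax hq hq' hk hkq huq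
      exact forbid_E6 h hp hq hq' hk2 (by omega) hkq huq
  have hiso := iso_pathWithArm h hp hq hk hkq hall
  have hk3 : k < 3 := by
    by_contra! h3
    exact forbid_E7 h hp hq h3 (by omega) hkq
  obtain rfl | rfl : k = 1 ∨ k = 2 := by omega
  · exact Or.inl ⟨m + 2, by omega, hiso⟩
  · have hm : m < 7 := by
      by_contra! h7
      exact forbid_E8 h hp hq h7 hkq
    obtain rfl | rfl | rfl : m = 4 ∨ m = 5 ∨ m = 6 := by omega
    · exact Or.inr (Or.inl hiso)
    · exact Or.inr (Or.inr (Or.inl hiso))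
    · exact Or.inr (Or.inr (Or.inr hiso))

end Spectrum

/-- A connected simple graph has all adjacency eigenvalues strictly below `2`
iff it is one of the simply-laced Coxeter–Dynkin diagrams
`Aₙ, Dₙ, E₆, E₇, E₈`. -/
theorem spectral_characterisation_ADE {V : Type} [Fintype V] [DecidableEq V]
    (G : SimpleGraph V) [DecidableRel G.Adj] (hconn : G.Connected) :
    (∀ μ : ℝ, Module.End.HasEigenvalue (Matrix.toLin' (G.adjMatrix ℝ)) μ → μ < 2) ↔
      ((∃ n : ℕ, Nonempty (G ≃g SimpleGraph.pathGraph n)) ∨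
       (∃ n : ℕ, 4 ≤ n ∧ Nonempty (G ≃g dynkinD n)) ∨
       Nonempty (G ≃g dynkinE 6) ∨
       Nonempty (G ≃g dynkinE 7) ∨
       Nonempty (G ≃g dynkinE 8)) := by
  constructor
  · exact fun h => classification hconn (quadForm_lt G h)
  · rintro (⟨n, ⟨e⟩⟩ | ⟨n, hn, ⟨e⟩⟩ | ⟨⟨e⟩⟩ | ⟨⟨e⟩⟩ | ⟨⟨e⟩⟩)
    · exact eigenvalue_lt_two_path G e
    · exact eigenvalue_lt_two_dynkinD G hn e
    all_goals exact eigenvalue_lt_two_dynkinE G (by omega) e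
end

section
/- A partial Latin square of order n with at most n − 1 filled cells can always be completed to a Latin square of order n (Smetaniuk's theorem / Evans conjecture). -/
/-!
The proof is by induction on the order `n = m + 1`, distinguishing whether some symbol occurs
exactly once.

If no symbol occurs exactly once, exchange the roles of rows and symbols, so that no row
has exactly one filled cell. Then the nonempty rows can be filled one after another by Hall's theorem:
a double count of filled cells (`hall_dense`) shows that Hall's condition holds, because each row
treated before accounts for at least two of the `n - 1` given cells. The remaining empty rows
extend a Latin rectangle, where Hall's condition holds by regularity (`hall_empty`).

If some symbol occurs exactly once, in a cell `e`, then permuting rows and columns moves `e` to the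
diagonal and every other filled cell strictly below it (`exists_arrangement`). Deleting `e`, the first
row and the last column leaves a partial Latin square of order `m` with at most `m - 1` cells,
which is completed by induction to a Latin square `L`. Smetaniuk's exchange argument
(`exchange_step`, `latin_extend`) turns `L` into a Latin square of order `m + 1` that has the
special symbol on the whole diagonal and agrees with `L` below it. The part of `L` above is
rearranged one column at a time, within the rows.

Squares are functions on `ℕ`, constrained only on indices below the order, and partial squares are
finite sets of triples (row, column, symbol), which makes the symmetry between the three
coordinates explicit.
-/

/-! ### Enlarging a Latin square by one -/

/-- The restriction of `L` to indices below `n` is a Latin square on the symbols `0, …, n - 1`;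
values of `L` elsewhere are irrelevant. -/
structure IsLatin (n : ℕ) (L : ℕ → ℕ → ℕ) : Prop where
  lt : ∀ i < n, ∀ j < n, L i j < n
  row : ∀ i < n, ∀ j < n, ∀ j' < n, L i j = L i j' → j = j'
  col : ∀ j < n, ∀ i < n, ∀ i' < n, L i j = L i' j → i = i'

/-- The state of the exchange process on a square `L` of order `m` when columns `1, …, k` have
been treated. `T` is `L` with entries permuted inside each row, and `y j` is the entry of column
`j` in a new row on top. The cells `(r, r + 1)` are holes: in the enlarged square they receive the
new symbol, and the entry `T r (r + 1)` is displaced into a new last column. So columns must be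
injective only away from their hole and together with `y`, while the displaced entries of the first
`k` rows must be distinct. The weakly lower triangle of `L` is never touched. -/
structure Exchange (m : ℕ) (L : ℕ → ℕ → ℕ) (k : ℕ) (T : ℕ → ℕ → ℕ) (y : ℕ → ℕ) : Prop where
  lt : ∀ r < m, ∀ j < m, T r j < m
  row : ∀ r < m, ∀ j < m, ∀ j' < m, T r j = T r j' → j = j'
  lower : ∀ r < m, ∀ j ≤ r, T r j = L r j
  later : ∀ r < m, ∀ j < m, k < j → T r j = L r j
  hole : ∀ r < k, ∀ r' < k, T r (r + 1) = T r' (r' + 1) → r = r'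
  col : ∀ j, 1 ≤ j → j ≤ k → ∀ r < m, ∀ r' < m, r + 1 ≠ j → r' + 1 ≠ j → T r j = T r' j → r = r'
  top_col : ∀ j, 1 ≤ j → j ≤ k → ∀ r < m, r + 1 ≠ j → y j ≠ T r j
  top_row : ∀ j, 1 ≤ j → j ≤ k → ∀ j', 1 ≤ j' → j' ≤ k → y j = y j' → j = j'
  top_hole : ∀ j, 1 ≤ j → j ≤ k → ∃ r < k, y j = T r (r + 1)

/-- Treating column `k + 1`. Its own hole displaces the entry in row `k`. If that entry is already
displaced from an earlier row `r`, the displaced entry of `r` is exchanged with the entry of `r`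
in column `k + 1`; this may create a new clash, and so on. The set `S` of rows reached by this chain
is the closure of `{k}`, and exchanging in all of its rows restores every invariant: closedness of
`S` keeps the new displaced entries distinct, minimality keeps the new column injective. -/
theorem exchange_step {m k : ℕ} {L T : ℕ → ℕ → ℕ} {y : ℕ → ℕ} (hL : IsLatin m L)
    (h : Exchange m L k T y) (hk : k + 1 < m) :
    ∃ T' y', Exchange m L (k + 1) T' y' := by
  classical
  obtain ⟨S, hS⟩ : ∃ S : ℕ → Prop, S = Relation.ReflTransGen
    (fun q r => r < k ∧ T r (r + 1) = L q (k + 1)) k := ⟨_, rfl⟩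
  have hSk : S k := by rw [hS]
  have hSle : ∀ r, S r → r ≤ k := by
    intro r hr
    rw [hS] at hr
    rcases hr.cases_tail with h0 | ⟨q, -, h1, -⟩ <;> omega
  have hclosed : ∀ q, S q → ∀ r < k, T r (r + 1) = L q (k + 1) → S r := by
    intro q hq r hr he
    rw [hS] at hq ⊢
    exact hq.tail ⟨hr, he⟩
  have hmin : ∀ r, S r → r < k → ∃ q, S q ∧ T r (r + 1) = L q (k + 1) := by
    intro r hr hrk
    rw [hS] at hr
    rcases hr.cases_tail with h0 | ⟨q, h0, -, h1⟩
    · omega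
    · exact ⟨q, by rw [hS]; exact h0, h1⟩
  -- One more entry of the new column lies in the chain than there are symbols displaced by it.
  obtain ⟨w, hw, hwx⟩ : ∃ w, (∃ q, S q ∧ w = L q (k + 1)) ∧
      ∀ r, S r → r < k → w ≠ T r (r + 1) := by
    let A := (Finset.range (k + 1)).filter S
    have hcard : ((A.erase k).image (fun r => T r (r + 1))).card
        < (A.image (fun q => L q (k + 1))).card := by
      rw [Finset.card_image_of_injOn (s := A)]
      · refine lt_of_le_of_lt Finset.card_image_le (Finset.card_erase_lt_of_mem ?_)
        simp [A, hSk]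
      · intro a ha b hb hab
        simp only [A, Finset.coe_filter, Finset.mem_range, Set.mem_ofPred_eq] at ha hb
        exact hL.col (k + 1) hk a (by omega) b (by omega) hab
    obtain ⟨w, hw1, hw2⟩ := Finset.exists_mem_notMem_of_card_lt_card hcard
    simp only [A, Finset.mem_image, Finset.mem_filter, Finset.mem_range, Finset.mem_erase,
      not_exists, not_and] at hw1 hw2
    obtain ⟨q, ⟨-, hq⟩, rfl⟩ := hw1
    exact ⟨_, ⟨q, hq, rfl⟩, fun r hr hrk he => hw2 r ⟨by omega, by omega, hr⟩ he.symm⟩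
  obtain ⟨q0, hq0, rfl⟩ := hw
  have hc : ∀ r < m, T r (k + 1) = L r (k + 1) := fun r hr => h.later r hr _ hk (by omega)
  let T' : ℕ → ℕ → ℕ := fun r j => if S r then T r (Equiv.swap (r + 1) (k + 1) j) else T r j
  have hT'S : ∀ r, S r → T' r (k + 1) = T r (r + 1) := by
    intro r hr; simp [T', hr]
  have hT'h : ∀ r, S r → T' r (r + 1) = L r (k + 1) := by
    intro r hr
    have := hSle r hr
    rw [← hc r (by omega)]; simp [T', hr]
  have hT'n : ∀ r, ¬ S r → ∀ j, T' r j = T r j := by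
    intro r hr j; simp [T', hr]
  have hT'o : ∀ r j, j ≠ r + 1 → j ≠ k + 1 → T' r j = T r j := by
    intro r j h1 h2
    by_cases hr : S r
    · simp [T', hr, Equiv.swap_apply_of_ne_of_ne h1 h2]
    · exact hT'n r hr j
  have hsw : ∀ r, S r → ∀ j < m, Equiv.swap (r + 1) (k + 1) j < m := by
    intro r hr j hj
    have := hSle r hr
    rw [Equiv.swap_apply_def]; split_ifs <;> omega
  have htop : ∀ r < k, L q0 (k + 1) ≠ T r (r + 1) := by
    intro r hr he
    exact hwx r (hclosed q0 hq0 r hr he.symm) hr he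
  -- Every symbol displaced before this step is still displaced from some row after it.
  have hhole : ∀ r < k, ∃ q < k + 1, T r (r + 1) = T' q (q + 1) := by
    intro r hr
    by_cases hSr : S r
    · obtain ⟨q, hq, he⟩ := hmin r hSr hr
      exact ⟨q, by have := hSle q hq; omega, by rw [he, hT'h q hq]⟩
    · exact ⟨r, by omega, by rw [hT'n r hSr]⟩
  refine ⟨T', fun j => if j = k + 1 then L q0 (k + 1) else y j, ?_, ?_, ?_, ?_, ?_, ?_, ?_, ?_, ?_⟩
  · intro r hr j hj
    by_cases hSr : S r
    · simpa [T', hSr] using h.lt r hr _ (hsw r hSr j hj)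
    · rw [hT'n r hSr]; exact h.lt r hr j hj
  · intro r hr j hj j' hj' he
    by_cases hSr : S r
    · simp only [T', hSr, if_true] at he
      exact (Equiv.swap (r + 1) (k + 1)).injective
        (h.row r hr _ (hsw r hSr j hj) _ (hsw r hSr j' hj') he)
    · rw [hT'n r hSr, hT'n r hSr] at he; exact h.row r hr j hj j' hj' he
  · intro r hr j hj
    by_cases hSr : S r
    · have := hSle r hSr
      rw [hT'o r j (by omega) (by omega)]; exact h.lower r hr j hj
    · rw [hT'n r hSr]; exact h.lower r hr j hj
  · intro r hr j hj hkj
    by_cases hSr : S r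
    · have := hSle r hSr
      rw [hT'o r j (by omega) (by omega)]; exact h.later r hr j hj (by omega)
    · rw [hT'n r hSr]; exact h.later r hr j hj (by omega)
  · intro r hr r' hr' he
    by_cases hSr : S r <;> by_cases hSr' : S r'
    · rw [hT'h r hSr, hT'h r' hSr'] at he
      exact hL.col _ hk r (by omega) r' (by omega) he
    · rw [hT'h r hSr, hT'n r' hSr'] at he
      have : r' ≠ k := by rintro rfl; exact hSr' hSk
      exact absurd (hclosed r hSr r' (by omega) he.symm) hSr'
    · rw [hT'n r hSr, hT'h r' hSr'] at he
      have : r ≠ k := by rintro rfl; exact hSr hSk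
      exact absurd (hclosed r' hSr' r (by omega) he) hSr
    · rw [hT'n r hSr, hT'n r' hSr'] at he
      have : r ≠ k := by rintro rfl; exact hSr hSk
      have : r' ≠ k := by rintro rfl; exact hSr' hSk
      exact h.hole r (by omega) r' (by omega) he
  · intro j hj1 hjk r hr r' hr' hne hne' he
    by_cases hj : j = k + 1
    · subst hj
      by_cases hSr : S r <;> by_cases hSr' : S r'
      · have := hSle r hSr
        have := hSle r' hSr'
        rw [hT'S r hSr, hT'S r' hSr'] at he
        exact h.hole r (by omega) r' (by omega) he
      · have := hSle r hSr
        rw [hT'S r hSr, hT'n r' hSr', hc r' hr'] at he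
        obtain ⟨q, hq, hqe⟩ := hmin r hSr (by omega)
        have := hSle q hq
        have := hL.col _ hk q (by omega) r' hr' (hqe.symm.trans he)
        exact absurd (this ▸ hq) hSr'
      · have := hSle r' hSr'
        rw [hT'S r' hSr', hT'n r hSr, hc r hr] at he
        obtain ⟨q, hq, hqe⟩ := hmin r' hSr' (by omega)
        have := hSle q hq
        have := hL.col _ hk q (by omega) r hr (hqe.symm.trans he.symm)
        exact absurd (this ▸ hq) hSr
      · rw [hT'n r hSr, hT'n r' hSr', hc r hr, hc r' hr'] at he
        exact hL.col _ hk r hr r' hr' he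
    · rw [hT'o r j (by omega) hj, hT'o r' j (by omega) hj] at he
      exact h.col j hj1 (by omega) r hr r' hr' hne hne' he
  · intro j hj1 hjk r hr hne
    by_cases hj : j = k + 1
    · subst hj
      simp only [if_true]
      by_cases hSr : S r
      · have := hSle r hSr
        rw [hT'S r hSr]; exact htop r (by omega)
      · rw [hT'n r hSr, hc r hr]
        intro he
        have := hSle q0 hq0
        have := hL.col _ hk q0 (by omega) r hr he
        exact hSr (this ▸ hq0)
    · simp only [hj, if_false]
      rw [hT'o r j (by omega) hj]
      exact h.top_col j hj1 (by omega) r hr hne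
  · intro j hj1 hjk j' hj1' hjk' he
    by_cases hj : j = k + 1 <;> by_cases hj' : j' = k + 1 <;>
      simp only [hj, hj', if_true, if_false] at he
    · omega
    · obtain ⟨r, hr, h1⟩ := h.top_hole j' hj1' (by omega)
      exact absurd (he.trans h1) (htop r hr)
    · obtain ⟨r, hr, h1⟩ := h.top_hole j hj1 (by omega)
      exact absurd (he.symm.trans h1) (htop r hr)
    · exact h.top_row j hj1 (by omega) j' hj1' (by omega) he
  · intro j hj1 hjk
    by_cases hj : j = k + 1
    · have := hSle q0 hq0
      exact ⟨q0, by omega, by rw [hT'h q0 hq0]; simp [hj]⟩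
    · obtain ⟨r, hr, h1⟩ := h.top_hole j hj1 (by omega)
      obtain ⟨q, hq, h2⟩ := hhole r hr
      exact ⟨q, hq, by simp only [hj, if_false]; rw [h1, h2]⟩

theorem exchange_exists {m : ℕ} {L : ℕ → ℕ → ℕ} (hL : IsLatin m L) :
    ∀ k < m, ∃ T y, Exchange m L k T y := by
  intro k
  induction k with
  | zero =>
    intro _
    exact ⟨L, fun _ => 0, hL.lt, hL.row, fun _ _ _ _ => rfl, fun _ _ _ _ _ => rfl,
      by omega, by omega, by omega, by omega, by omega⟩
  | succ k ih =>
    intro hk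
    obtain ⟨T, y, h⟩ := ih (by omega)
    exact exchange_step hL h hk

/-- A Latin square of order `m` yields one of order `m + 1` with the new symbol `m` on the diagonal
and the weakly lower triangle of the old square, shifted down by one, strictly below it. -/
theorem latin_extend {m : ℕ} (hm : 0 < m) {L : ℕ → ℕ → ℕ} (hL : IsLatin m L) :
    ∃ G, IsLatin (m + 1) G ∧ (∀ i ≤ m, G i i = m) ∧
      ∀ i < m, ∀ j ≤ i, G (i + 1) j = L i j := by
  classical
  obtain ⟨T, y, h⟩ := exchange_exists hL (m - 1) (by omega)
  -- The symbol `z` not displaced from any row goes to the corner of the new row and column.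
  obtain ⟨z, hzm, hz⟩ : ∃ z < m, ∀ r < m - 1, z ≠ T r (r + 1) := by
    have hcard : ((Finset.range (m - 1)).image (fun r => T r (r + 1))).card
        < (Finset.range m).card := by
      refine lt_of_le_of_lt Finset.card_image_le ?_
      simp only [Finset.card_range]; omega
    obtain ⟨z, hz1, hz2⟩ := Finset.exists_mem_notMem_of_card_lt_card hcard
    simp only [Finset.mem_image, Finset.mem_range, not_exists, not_and] at hz1 hz2
    exact ⟨z, hz1, fun r hr he => hz2 r hr he.symm⟩
  have hyz : ∀ j, 1 ≤ j → j < m → y j ≠ z := by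
    intro j h1 h2 he
    obtain ⟨r, hr, h3⟩ := h.top_hole j h1 (by omega)
    exact hz r hr (he.symm.trans h3)
  have hym : ∀ j, 1 ≤ j → j < m → y j < m := by
    intro j h1 h2
    obtain ⟨r, hr, h3⟩ := h.top_hole j h1 (by omega)
    rw [h3]; exact h.lt r (by omega) _ (by omega)
  let G : ℕ → ℕ → ℕ := fun i j =>
    if i = j then m else if i = 0 then (if j = m then z else y j)
    else if j = m then T (i - 1) i else T (i - 1) j
  have hGd : ∀ i, G i i = m := fun i => by simp [G]
  have hG0 : ∀ j, 1 ≤ j → j < m → G 0 j = y j := by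
    intro j h1 h2
    simp [G, show (0 : ℕ) ≠ j by omega, show j ≠ m by omega]
  have hG0m : G 0 m = z := by simp [G, show (0 : ℕ) ≠ m by omega]
  have hGm : ∀ r, r + 1 < m → G (r + 1) m = T r (r + 1) := by
    intro r hr; simp [G, show r + 1 ≠ m by omega]
  have hG : ∀ r j, j < m → j ≠ r + 1 → G (r + 1) j = T r j := by
    intro r j hj hr
    simp [G, show r + 1 ≠ j by omega, show j ≠ m by omega]
  have hGlt : ∀ i ≤ m, ∀ j ≤ m, i ≠ j → G i j < m := by
    intro i hi j hj hij
    rcases i with _ | r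
    · rcases eq_or_lt_of_le hj with rfl | hj
      · rwa [hG0m]
      · rw [hG0 j (by omega) hj]; exact hym j (by omega) hj
    · rcases eq_or_lt_of_le hj with rfl | hj
      · rw [hGm r (by omega)]; exact h.lt r (by omega) _ (by omega)
      · rw [hG r j hj (by omega)]; exact h.lt r (by omega) _ (by omega)
  refine ⟨G, ⟨?_, ?_, ?_⟩, fun i _ => hGd i, ?_⟩
  · intro i hi j hj
    by_cases hij : i = j
    · subst hij; rw [hGd]; omega
    · have := hGlt i (by omega) j (by omega) hij; omega
  · intro i hi
    -- by symmetry only pairs of columns in increasing order matter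
    have key : ∀ j j', j < j' → j' ≤ m → G i j ≠ G i j' := by
      intro j j' hjj hj' he
      by_cases h1 : i = j
      · subst h1
        have := hGlt i (by omega) j' hj' (by omega)
        rw [hGd] at he; omega
      by_cases h2 : i = j'
      · subst h2
        have := hGlt i (by omega) j (by omega) h1
        rw [hGd] at he; omega
      rcases i with _ | r
      · rw [hG0 j (by omega) (by omega)] at he
        rcases eq_or_lt_of_le hj' with rfl | hj'
        · rw [hG0m] at he; exact hyz j (by omega) (by omega) he
        · rw [hG0 j' (by omega) hj'] at he
          have := h.top_row j (by omega) (by omega) j' (by omega) (by omega) he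
          omega
      · rw [hG r j (by omega) (by omega)] at he
        rcases eq_or_lt_of_le hj' with rfl | hj'
        · rw [hGm r (by omega)] at he
          have := h.row r (by omega) j (by omega) (r + 1) (by omega) he
          omega
        · rw [hG r j' hj' (by omega)] at he
          have := h.row r (by omega) j (by omega) j' (by omega) he
          omega
    intro j hj j' hj' he
    rcases lt_trichotomy j j' with h1 | h1 | h1
    · exact absurd he (key j j' h1 (by omega))
    · exact h1
    · exact absurd he.symm (key j' j h1 (by omega))
  · intro j hj
    have key : ∀ i i', i < i' → i' ≤ m → G i j ≠ G i' j := by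
      intro i i' hii hi' he
      by_cases h1 : i = j
      · subst h1
        have := hGlt i' hi' i (by omega) (by omega)
        rw [hGd] at he; omega
      by_cases h2 : i' = j
      · subst h2
        have := hGlt i (by omega) i' (by omega) h1
        rw [hGd] at he; omega
      obtain ⟨r', rfl⟩ : ∃ r', i' = r' + 1 := ⟨i' - 1, by omega⟩
      rcases eq_or_lt_of_le (Nat.lt_succ_iff.mp hj) with rfl | hj
      · rw [hGm r' (by omega)] at he
        rcases i with _ | r
        · rw [hG0m] at he; exact hz r' (by omega) he
        · rw [hGm r (by omega)] at he
          have := h.hole r (by omega) r' (by omega) he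
          omega
      · rw [hG r' j hj (by omega)] at he
        rcases i with _ | r
        · rw [hG0 j (by omega) hj] at he
          exact h.top_col j (by omega) (by omega) r' (by omega) (by omega) he
        · rw [hG r j hj (by omega)] at he
          rcases Nat.eq_zero_or_pos j with rfl | hj0
          · rw [h.lower r (by omega) 0 (by omega), h.lower r' (by omega) 0 (by omega)] at he
            have := hL.col 0 hm r (by omega) r' (by omega) he
            omega
          · have := h.col j hj0 (by omega) r (by omega) r' (by omega) (by omega) (by omega) he
            omega
    intro i hi i' hi' he
    rcases lt_trichotomy i i' with h1 | h1 | h1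
    · exact absurd he (key i i' h1 (by omega))
    · exact h1
    · exact absurd he.symm (key i' i h1 (by omega))
  · intro i hi j hj
    rw [hG i j (by omega) (by omega), h.lower i hi j hj]

/-! ### Arranging the filled cells around the diagonal -/

/-- `T` is a partial Latin square of order `n`, given as its set of triples
(row, column, symbol) with entries below `n`: any two coordinates of a triple determine the
third. -/
structure IsPLS (n : ℕ) (T : Finset (ℕ × ℕ × ℕ)) : Prop where
  lt : ∀ i j v, (i, j, v) ∈ T → i < n ∧ j < n ∧ v < n
  sym : ∀ i j v v', (i, j, v) ∈ T → (i, j, v') ∈ T → v = v'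
  colu : ∀ i j j' v, (i, j, v) ∈ T → (i, j', v) ∈ T → j = j'
  rowu : ∀ i i' j v, (i, j, v) ∈ T → (i', j, v) ∈ T → i = i'

/-- Fewer than `n` cells, one of them `e`, can be moved by permuting rows and columns of an
`n × n` board so that `e` lies on the diagonal and all the others strictly below it. -/
theorem exists_arrangement (n : ℕ) : ∀ (R C : Finset ℕ) (F : Finset (ℕ × ℕ)) (e : ℕ × ℕ),
    R.card = n → C.card = n → (∀ p ∈ F, p.1 ∈ R ∧ p.2 ∈ C) → e ∈ F → F.card < n →
    ∃ ρ σ : ℕ → ℕ, (∀ a ∈ R, ρ a < n) ∧ (∀ b ∈ C, σ b < n) ∧ Set.InjOn ρ R ∧ Set.InjOn σ C ∧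
      ρ e.1 = σ e.2 ∧ ∀ p ∈ F, p ≠ e → σ p.2 < ρ p.1 := by
  classical
  induction n with
  | zero =>
    intro R C F e hR _ hF he _
    rw [Finset.card_eq_zero] at hR
    have := (hF e he).1
    simp [hR] at this
  | succ n ih =>
    intro R C F e hR hC hF he hcard
    obtain ⟨heR, heC⟩ := hF e he
    by_cases h1 : ∃ p ∈ F, p.1 ≠ e.1
    · -- A nonempty row avoiding `e` goes last, together with an empty column.
      obtain ⟨p, hp, hpe⟩ := h1
      obtain ⟨c, hcC, hcF⟩ := Finset.exists_mem_notMem_of_card_lt_card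
        (s := F.image Prod.snd) (t := C) (lt_of_le_of_lt Finset.card_image_le (by omega))
      have hcF : ∀ q ∈ F, q.2 ≠ c := fun q hq hqc => hcF (Finset.mem_image.2 ⟨q, hq, hqc⟩)
      have hpR := (hF p hp).1
      have hFc : (F.filter (fun q => q.1 ≠ p.1)).card < F.card :=
        Finset.card_lt_card (Finset.filter_ssubset.2 ⟨p, hp, by simp⟩)
      obtain ⟨ρ, σ, hρ, hσ, hρi, hσi, hd, hl⟩ := ih (R.erase p.1) (C.erase c)
        (F.filter (fun q => q.1 ≠ p.1)) e
        (by rw [Finset.card_erase_of_mem hpR]; omega)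
        (by rw [Finset.card_erase_of_mem hcC]; omega)
        (by
          intro q hq
          rw [Finset.mem_filter] at hq
          exact ⟨Finset.mem_erase.2 ⟨hq.2, (hF q hq.1).1⟩,
            Finset.mem_erase.2 ⟨hcF q hq.1, (hF q hq.1).2⟩⟩)
        (Finset.mem_filter.2 ⟨he, hpe.symm⟩) (by omega)
      refine ⟨fun a => if a = p.1 then n else ρ a, fun b => if b = c then n else σ b,
        ?_, ?_, ?_, ?_, ?_, ?_⟩
      · intro a ha
        have := hρ a
        grind
      · intro b hb
        have := hσ b
        grind
      · intro a ha b hb hab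
        have h1 := hρ a
        have h2 := hρ b
        have h3 := @hρi a
        simp only [Finset.coe_erase, Set.mem_sdiff, Finset.mem_coe, Set.mem_singleton_iff] at h3 ha hb
        grind
      · intro a ha b hb hab
        have h1 := hσ a
        have h2 := hσ b
        have h3 := @hσi a
        simp only [Finset.coe_erase, Set.mem_sdiff, Finset.mem_coe, Set.mem_singleton_iff] at h3 ha hb
        grind
      · simp only [if_neg hpe.symm, if_neg (hcF e he)]; exact hd
      · intro q hq hqe
        simp only [if_neg (hcF q hq)]
        split_ifs with h
        · exact hσ _ (Finset.mem_erase.2 ⟨hcF q hq, (hF q hq).2⟩)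
        · exact hl q (Finset.mem_filter.2 ⟨hq, h⟩) hqe
    push Not at h1
    by_cases h2 : ∃ p ∈ F, p ≠ e
    · -- All cells share the row of `e`: the column of another cell goes first, with an empty row.
      obtain ⟨p, hp, hpe⟩ := h2
      have hcol : ∀ q ∈ F, q.2 = p.2 → q = p := fun q hq h =>
        Prod.ext ((h1 q hq).trans (h1 p hp).symm) h
      have hFc : 1 < F.card := Finset.one_lt_card.2 ⟨p, hp, e, he, hpe⟩
      obtain ⟨r, hrR, hre⟩ := Finset.exists_mem_ne (s := R) (by omega) e.1
      have hpC := (hF p hp).2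
      obtain ⟨ρ, σ, hρ, hσ, hρi, hσi, hd, hl⟩ := ih (R.erase r) (C.erase p.2) (F.erase p) e
        (by rw [Finset.card_erase_of_mem hrR]; omega)
        (by rw [Finset.card_erase_of_mem hpC]; omega)
        (by
          intro q hq
          rw [Finset.mem_erase] at hq
          refine ⟨Finset.mem_erase.2 ⟨?_, (hF q hq.2).1⟩,
            Finset.mem_erase.2 ⟨fun h => hq.1 (hcol q hq.2 h), (hF q hq.2).2⟩⟩
          rw [h1 q hq.2]; exact hre.symm)
        (Finset.mem_erase.2 ⟨hpe.symm, he⟩)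
        (by rw [Finset.card_erase_of_mem hp]; omega)
      refine ⟨fun a => if a = r then 0 else ρ a + 1, fun b => if b = p.2 then 0 else σ b + 1,
        ?_, ?_, ?_, ?_, ?_, ?_⟩
      · intro a ha
        have := hρ a
        grind
      · intro b hb
        have := hσ b
        grind
      · intro a ha b hb hab
        have h3 := @hρi a
        simp only [Finset.coe_erase, Set.mem_sdiff, Finset.mem_coe, Set.mem_singleton_iff] at h3 ha hb
        grind
      · intro a ha b hb hab
        have h3 := @hσi a
        simp only [Finset.coe_erase, Set.mem_sdiff, Finset.mem_coe, Set.mem_singleton_iff] at h3 ha hb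
        grind
      · simp only [if_neg hre.symm, if_neg (fun h => hpe (hcol e he h).symm), hd]
      · intro q hq hqe
        have hqr : q.1 ≠ r := by rw [h1 q hq]; exact hre.symm
        simp only [if_neg hqr]
        split_ifs with h
        · omega
        · have := hl q (Finset.mem_erase.2 ⟨fun h' => h (by rw [h']), hq⟩) hqe
          omega
    · -- Only `e` is left: any bijections sending its row and its column to `0` will do.
      push Not at h2
      have key : ∀ A : Finset ℕ, A.card = n + 1 → ∀ a ∈ A,
          ∃ f : ℕ → ℕ, (∀ x ∈ A, f x < n + 1) ∧ Set.InjOn f A ∧ f a = 0 := by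
        intro A hA a ha
        obtain ⟨f, hf⟩ : ∃ f : ℕ → ℕ, Set.BijOn f A (Finset.range (n + 1)) :=
          Set.Finite.exists_bijOn_of_encard_eq (Finset.finite_toSet _) (by
            rw [Set.encard_coe_eq_coe_finsetCard, Set.encard_coe_eq_coe_finsetCard, hA,
              Finset.card_range])
        refine ⟨fun x => Equiv.swap (f a) 0 (f x), ?_, ?_, by simp⟩
        · intro x hx
          have h1 := hf.mapsTo hx
          have h2 := hf.mapsTo ha
          simp only [Finset.coe_range, Set.mem_Iio] at h1 h2
          simp only [Equiv.swap_apply_def]; split_ifs <;> omega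
        · exact (Equiv.injective _).comp_injOn hf.injOn
      obtain ⟨ρ, hρ, hρi, hρe⟩ := key R hR e.1 heR
      obtain ⟨σ, hσ, hσi, hσe⟩ := key C hC e.2 heC
      exact ⟨ρ, σ, hρ, hσ, hρi, hσi, by rw [hρe, hσe], fun p hp hpe => absurd (h2 p hp) hpe⟩

/-! ### Filling rows by Hall's theorem -/

/-- The symbols that may be placed in column `j` of row `a`. -/
noncomputable def avail (n : ℕ) (T : Finset (ℕ × ℕ × ℕ)) (a j : ℕ) : Finset ℕ :=
  open Classical in
  (Finset.range n).filter (fun v => (∀ j', (a, j', v) ∉ T) ∧ ∀ i, (i, j, v) ∉ T)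

/-- Every cell of row `a` is filled. -/
def RowFull (n : ℕ) (T : Finset (ℕ × ℕ × ℕ)) (a : ℕ) : Prop :=
  ∀ j < n, ∃ v, (a, j, v) ∈ T

/-- If the empty cells of row `a` satisfy Hall's condition, they can be filled with distinct
available symbols, leaving all other rows unchanged. -/
theorem fill_row {n a : ℕ} {T : Finset (ℕ × ℕ × ℕ)} (hT : IsPLS n T) (ha : a < n)
    (hall : ∀ J : Finset ℕ, (∀ j ∈ J, j < n ∧ ∀ v, (a, j, v) ∉ T) →
      J.card ≤ (J.biUnion (avail n T a)).card) :
    ∃ T', T ⊆ T' ∧ IsPLS n T' ∧ RowFull n T' a ∧ ∀ t ∈ T', t.1 ≠ a → t ∈ T := by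
  classical
  let X := {j : ℕ // j < n ∧ ∀ v, (a, j, v) ∉ T}
  obtain ⟨f, hfi, hf⟩ := (Finset.all_card_le_biUnion_card_iff_exists_injective
    (fun x : X => avail n T a x.1)).1 (by
      intro J
      have := hall (J.image Subtype.val) (by
        intro j hj
        obtain ⟨x, -, rfl⟩ := Finset.mem_image.1 hj
        exact x.2)
      rwa [Finset.card_image_of_injective _ Subtype.val_injective, Finset.image_biUnion] at this)
  have hf : ∀ x : X, f x < n ∧ (∀ j', (a, j', f x) ∉ T) ∧ ∀ i, (i, x.1, f x) ∉ T := by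
    intro x
    simpa [avail] using hf x
  have hfin : {t : ℕ × ℕ × ℕ | ∃ x : X, t = (a, x.1, f x)}.Finite := by
    refine Set.Finite.subset (Finset.finite_toSet
      (({a} : Finset ℕ) ×ˢ (Finset.range n) ×ˢ (Finset.range n))) ?_
    rintro _ ⟨x, rfl⟩
    simp [x.2.1, (hf x).1]
  have hmem : ∀ i j v, (i, j, v) ∈ T ∪ hfin.toFinset ↔
      (i, j, v) ∈ T ∨ i = a ∧ ∃ h : _, f ⟨j, h⟩ = v := by
    intro i j v
    simp only [Finset.mem_union, Set.Finite.mem_toFinset, Set.mem_ofPred_eq, Prod.mk.injEq]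
    constructor
    · rintro (h | ⟨x, rfl, rfl, rfl⟩)
      · exact Or.inl h
      · exact Or.inr ⟨rfl, x.2, rfl⟩
    · rintro (h | ⟨rfl, h, rfl⟩)
      · exact Or.inl h
      · exact Or.inr ⟨⟨j, h⟩, rfl, rfl, rfl⟩
  refine ⟨T ∪ hfin.toFinset, Finset.subset_union_left, ⟨?_, ?_, ?_, ?_⟩, ?_, ?_⟩
  · intro i j v h
    rcases (hmem i j v).1 h with h1 | ⟨rfl, h1, rfl⟩
    · exact hT.lt i j v h1
    · exact ⟨ha, h1.1, (hf _).1⟩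
  · intro i j v v' h h'
    rcases (hmem _ _ _).1 h with h1 | ⟨e1, h1, e2⟩ <;>
      rcases (hmem _ _ _).1 h' with h2 | ⟨e3, h2, e4⟩
    · exact hT.sym i j v v' h1 h2
    · subst e3; exact absurd h1 (h2.2 _)
    · subst e1; exact absurd h2 (h1.2 _)
    · exact e2.symm.trans e4
  · intro i j j' v h h'
    rcases (hmem _ _ _).1 h with h1 | ⟨e1, h1, e2⟩ <;>
      rcases (hmem _ _ _).1 h' with h2 | ⟨e3, h2, e4⟩
    · exact hT.colu i j j' v h1 h2
    · subst e3 e4; exact absurd h1 ((hf ⟨j', h2⟩).2.1 _)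
    · subst e1 e2; exact absurd h2 ((hf ⟨j, h1⟩).2.1 _)
    · exact congrArg Subtype.val (hfi (e2.trans e4.symm))
  · intro i i' j v h h'
    rcases (hmem _ _ _).1 h with h1 | ⟨e1, h1, e2⟩ <;>
      rcases (hmem _ _ _).1 h' with h2 | ⟨e3, h2, e4⟩
    · exact hT.rowu i i' j v h1 h2
    · subst e4; exact absurd h1 ((hf ⟨j, h2⟩).2.2 _)
    · subst e2; exact absurd h2 ((hf ⟨j, h1⟩).2.2 _)
    · exact e1.trans e3.symm
  · intro j hj
    by_cases h : ∃ v, (a, j, v) ∈ T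
    · obtain ⟨v, hv⟩ := h
      exact ⟨v, (hmem _ _ _).2 (Or.inl hv)⟩
    · push Not at h
      exact ⟨f ⟨j, hj, h⟩, (hmem _ _ _).2 (Or.inr ⟨rfl, ⟨hj, h⟩, rfl⟩)⟩
  · rintro ⟨i, j, v⟩ ht hne
    rcases (hmem _ _ _).1 ht with h | ⟨rfl, -⟩
    · exact h
    · exact absurd rfl hne

/-- Hall's condition for extending a Latin rectangle by a row: the graph joining a column to the
symbols missing from it is regular of degree `n - |S|`. -/
theorem hall_empty {n a : ℕ} {S : Finset ℕ} {Q : Finset (ℕ × ℕ × ℕ)} (hQ : IsPLS n Q)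
    (haS : a ∉ S) (ha : a < n) (hSn : ∀ i ∈ S, i < n)
    (hfull : ∀ i ∈ S, RowFull n Q i) (hrest : ∀ t ∈ Q, t.1 ∈ S)
    (J : Finset ℕ) (hJ : ∀ j ∈ J, j < n) :
    J.card ≤ (J.biUnion (avail n Q a)).card := by
  classical
  have hSlt : S.card < n := by
    have : (insert a S).card ≤ (Finset.range n).card := Finset.card_le_card (by
      intro i hi
      rw [Finset.mem_range]
      rcases Finset.mem_insert.1 hi with rfl | hi
      · exact ha
      · exact hSn i hi)
    rw [Finset.card_insert_of_notMem haS, Finset.card_range] at this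
    omega
  choose! f hf using hfull
  have hav : ∀ j v, v ∈ avail n Q a j ↔ v < n ∧ ∀ i, (i, j, v) ∉ Q := by
    intro j v
    simp only [avail, Finset.mem_filter, Finset.mem_range]
    exact ⟨fun h => ⟨h.1, h.2.2⟩, fun h => ⟨h.1, fun j' h' => haS (hrest _ h'), h.2⟩⟩
  have key := Finset.card_mul_le_card_mul (s := J) (t := J.biUnion (avail n Q a))
    (fun j v => v ∈ avail n Q a j) (m := n - S.card) (n := n - S.card) ?_ ?_
  · exact Nat.le_of_mul_le_mul_right key (by omega)
  · intro j hj
    have hsub : Finset.range n \ S.image (fun i => f i j) ⊆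
        (J.biUnion (avail n Q a)).bipartiteAbove (fun j v => v ∈ avail n Q a j) j := by
      intro v hv
      rw [Finset.mem_sdiff, Finset.mem_range, Finset.mem_image] at hv
      have : v ∈ avail n Q a j := by
        rw [hav]
        refine ⟨hv.1, fun i hi => hv.2 ⟨i, hrest _ hi, ?_⟩⟩
        exact hQ.sym i j _ _ (hf i (hrest _ hi) j (hJ j hj)) hi
      rw [Finset.mem_bipartiteAbove]
      exact ⟨Finset.mem_biUnion.2 ⟨j, hj, this⟩, this⟩
    refine le_trans ?_ (Finset.card_le_card hsub)
    have := Finset.le_card_sdiff (S.image (fun i => f i j)) (Finset.range n)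
    have := Finset.card_image_le (s := S) (f := fun i => f i j)
    rw [Finset.card_range] at *
    omega
  · intro v hv
    -- each full row contains `v`, and different rows contain it in different columns
    have hvn : v < n := by
      obtain ⟨j, -, h⟩ := Finset.mem_biUnion.1 hv
      exact ((hav j v).1 h).1
    have hex : ∀ i ∈ S, ∃ j < n, f i j = v := by
      intro i hi
      have := Finset.surj_on_of_inj_on_of_card_le (s := Finset.range n) (t := Finset.range n)
        (fun j _ => f i j)
        (fun j hj => Finset.mem_range.2 (hQ.lt _ _ _ (hf i hi j (Finset.mem_range.1 hj))).2.2)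
        (fun j j' hj hj' h => hQ.colu i j j' (f i j) (hf i hi j (Finset.mem_range.1 hj))
          (h ▸ hf i hi j' (Finset.mem_range.1 hj'))) le_rfl v (Finset.mem_range.2 hvn)
      obtain ⟨j, hj, h⟩ := this
      exact ⟨j, Finset.mem_range.1 hj, h.symm⟩
    choose! g hg hgv using hex
    have hgQ : ∀ i ∈ S, (i, g i, v) ∈ Q := fun i hi => by
      have := hf i hi (g i) (hg i hi)
      rwa [hgv i hi] at this
    have hsub : J.bipartiteBelow (fun j v => v ∈ avail n Q a j) v ⊆
        Finset.range n \ S.image g := by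
      intro j hj
      rw [Finset.mem_bipartiteBelow] at hj
      rw [Finset.mem_sdiff, Finset.mem_range]
      refine ⟨hJ j hj.1, fun h => ?_⟩
      obtain ⟨i, hi, rfl⟩ := Finset.mem_image.1 h
      exact ((hav _ _).1 hj.2).2 i (hgQ i hi)
    refine le_trans (Finset.card_le_card hsub) ?_
    rw [Finset.card_sdiff_of_subset, Finset.card_range, Finset.card_image_of_injOn]
    · intro i hi i' hi' h
      have h1 := hgQ i' hi'
      have h : g i = g i' := h
      rw [← h] at h1
      exact hQ.rowu i i' (g i) v (hgQ i hi) h1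
    · intro j hj
      obtain ⟨i, hi, rfl⟩ := Finset.mem_image.1 hj
      exact Finset.mem_range.2 (hg i hi)

/-- Hall's condition for a row `a` of a partly completed square `Q`, in which the rows of `S` have
been filled and each of them had at least two entries in the original `T`. If `J` violates it,
let `B` be the symbols that are neither in row `a` nor available for any column of `J`. Each of the
`|J| |B|` pairs in `J × B` is realised by a filled cell outside row `a`; a row of `S` realises at
most `min |J| |B|` of them, and the other rows have few cells altogether, since the rows of `S` use up
at least `2 |S|` of the at most `n - 1` cells of `T`. As `|J| + |B|` is large, this is impossible. -/
theorem hall_dense {n a : ℕ} {S : Finset ℕ} {T Q : Finset (ℕ × ℕ × ℕ)}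
    (hQ : IsPLS n Q) (hcard : T.card ≤ n - 1)
    (htwo : ∀ i ∈ S, 2 ≤ (T.filter (fun t => t.1 = i)).card)
    (haS : a ∉ S) (ha : a < n) (hrest : ∀ t ∈ Q, t.1 ∉ S → t ∈ T)
    (J : Finset ℕ) (hJ : ∀ j ∈ J, j < n ∧ ∀ v, (a, j, v) ∉ Q) :
    J.card ≤ (J.biUnion (avail n Q a)).card := by
  classical
  by_contra! hlt
  let Ra := Q.filter (fun t => t.1 = a)
  let B := (Finset.range n).filter
    (fun v => (∀ j', (a, j', v) ∉ Q) ∧ ∀ j ∈ J, ∃ i, (i, j, v) ∈ Q)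
  let K := Q.filter (fun t => t.2.1 ∈ J ∧ t.2.2 ∈ B)
  let F := K.filter (fun t => t.1 ∉ S)
  have hn : n ≤ B.card + (J.biUnion (avail n Q a)).card + Ra.card := by
    have hsub : Finset.range n ⊆
        (B ∪ J.biUnion (avail n Q a)) ∪ Ra.image (fun t => t.2.2) := by
      intro v hv
      simp only [Finset.mem_union]
      by_cases h1 : ∃ j', (a, j', v) ∈ Q
      · obtain ⟨j', h⟩ := h1
        exact Or.inr (Finset.mem_image.2 ⟨_, Finset.mem_filter.2 ⟨h, rfl⟩, rfl⟩)
      · push Not at h1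
        by_cases h2 : ∀ j ∈ J, ∃ i, (i, j, v) ∈ Q
        · exact Or.inl (Or.inl (Finset.mem_filter.2 ⟨hv, h1, h2⟩))
        · push Not at h2
          obtain ⟨j, hj, h2⟩ := h2
          exact Or.inl (Or.inr (Finset.mem_biUnion.2
            ⟨j, hj, by simp only [avail, Finset.mem_filter]; exact ⟨hv, h1, h2⟩⟩))
    have h1 := Finset.card_le_card hsub
    have h2 := Finset.card_union_le (B ∪ J.biUnion (avail n Q a)) (Ra.image (fun t => t.2.2))
    have h3 := Finset.card_union_le B (J.biUnion (avail n Q a))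
    have h4 := Finset.card_image_le (s := Ra) (f := fun t => t.2.2)
    rw [Finset.card_range] at h1
    omega
  have hJa : J.card + Ra.card ≤ n := by
    have h1 : (Ra.image (fun t => t.2.1)).card = Ra.card := by
      apply Finset.card_image_of_injOn
      rintro ⟨i, j, v⟩ h ⟨i', j', v'⟩ h' hj
      simp only [Ra, Finset.coe_filter, Set.mem_ofPred_eq] at h h' hj
      obtain ⟨h, rfl⟩ := h
      obtain ⟨h', rfl⟩ := h'
      subst hj
      rw [hQ.sym _ _ _ _ h h']
    have h2 : Disjoint J (Ra.image (fun t => t.2.1)) := by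
      rw [Finset.disjoint_left]
      intro j hj hj'
      obtain ⟨⟨i, j, v⟩, ht, rfl⟩ := Finset.mem_image.1 hj'
      obtain ⟨htQ, rfl⟩ := Finset.mem_filter.1 ht
      exact (hJ _ hj).2 _ htQ
    have h3 : (J ∪ Ra.image (fun t => t.2.1)).card ≤ (Finset.range n).card :=
      Finset.card_le_card (by
        intro j hj
        rw [Finset.mem_range]
        rcases Finset.mem_union.1 hj with hj | hj
        · exact (hJ j hj).1
        · obtain ⟨⟨i, j, v⟩, ht, rfl⟩ := Finset.mem_image.1 hj
          exact (hQ.lt _ _ _ (Finset.mem_filter.1 ht).1).2.1)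
    rw [Finset.card_union_of_disjoint h2, h1, Finset.card_range] at h3
    exact h3
  have hJB : J.card * B.card ≤ K.card := by
    rw [← Finset.card_product]
    refine le_trans (Finset.card_le_card (t := K.image Prod.snd) ?_) Finset.card_image_le
    rintro ⟨j, v⟩ h
    obtain ⟨hj, hv⟩ := Finset.mem_product.1 h
    obtain ⟨i, hi⟩ := (Finset.mem_filter.1 hv).2.2 j hj
    exact Finset.mem_image.2 ⟨(i, j, v), Finset.mem_filter.2 ⟨hi, hj, hv⟩, rfl⟩
  have hKF : (K.filter (fun t => t.1 ∈ S)).card + F.card = K.card :=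
    Finset.card_filter_add_card_filter_not _
  have hKJ : (K.filter (fun t => t.1 ∈ S)).card ≤ J.card * S.card := by
    refine Finset.card_le_mul_card_image_of_maps_to (f := fun t : ℕ × ℕ × ℕ => t.1)
      (fun t ht => (Finset.mem_filter.1 ht).2) _ fun i _ => ?_
    refine Finset.card_le_card_of_injOn (fun t => t.2.1) (fun t ht => ?_) ?_
    · exact (Finset.mem_filter.1 (Finset.mem_filter.1 (Finset.mem_filter.1 ht).1).1).2.1
    · rintro ⟨i, j, v⟩ h ⟨i', j', v'⟩ h' hj
      simp only [K, Finset.coe_filter, Finset.mem_filter, Set.mem_ofPred_eq] at h h' hj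
      obtain ⟨⟨⟨h, -⟩, -⟩, rfl⟩ := h
      obtain ⟨⟨⟨h', -⟩, -⟩, rfl⟩ := h'
      subst hj
      rw [hQ.sym _ _ _ _ h h']
  have hKB : (K.filter (fun t => t.1 ∈ S)).card ≤ B.card * S.card := by
    refine Finset.card_le_mul_card_image_of_maps_to (f := fun t : ℕ × ℕ × ℕ => t.1)
      (fun t ht => (Finset.mem_filter.1 ht).2) _ fun i _ => ?_
    refine Finset.card_le_card_of_injOn (fun t => t.2.2) (fun t ht => ?_) ?_
    · exact (Finset.mem_filter.1 (Finset.mem_filter.1 (Finset.mem_filter.1 ht).1).1).2.2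
    · rintro ⟨i, j, v⟩ h ⟨i', j', v'⟩ h' hv
      simp only [K, Finset.coe_filter, Finset.mem_filter, Set.mem_ofPred_eq] at h h' hv
      obtain ⟨⟨⟨h, -⟩, -⟩, rfl⟩ := h
      obtain ⟨⟨⟨h', -⟩, -⟩, rfl⟩ := h'
      subst hv
      rw [hQ.colu _ _ _ _ h h']
  have hTcount : 2 * S.card + (Ra.card + F.card) ≤ T.card := by
    have h1 : 2 * S.card ≤ (T.filter (fun t => t.1 ∈ S)).card := by
      refine Finset.mul_card_image_le_card_of_maps_to (f := fun t : ℕ × ℕ × ℕ => t.1)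
        (fun t ht => (Finset.mem_filter.1 ht).2) _ fun i hi => ?_
      refine le_trans (htwo i hi) (Finset.card_le_card ?_)
      intro t ht
      obtain ⟨htT, rfl⟩ := Finset.mem_filter.1 ht
      exact Finset.mem_filter.2 ⟨Finset.mem_filter.2 ⟨htT, hi⟩, rfl⟩
    have h2 : Disjoint Ra F := by
      rw [Finset.disjoint_left]
      rintro ⟨i, j, v⟩ h h'
      obtain ⟨hQt, rfl⟩ := Finset.mem_filter.1 h
      have hv := (Finset.mem_filter.1 (Finset.mem_filter.1 h').1).2.2
      exact (Finset.mem_filter.1 hv).2.1 _ hQt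
    have h3 : Ra ∪ F ⊆ T.filter (fun t => t.1 ∉ S) := by
      intro t ht
      rcases Finset.mem_union.1 ht with ht | ht
      · obtain ⟨ht, h⟩ := Finset.mem_filter.1 ht
        have : t.1 ∉ S := by rw [h]; exact haS
        exact Finset.mem_filter.2 ⟨hrest t ht this, this⟩
      · obtain ⟨ht, h⟩ := Finset.mem_filter.1 ht
        exact Finset.mem_filter.2 ⟨hrest t (Finset.mem_filter.1 ht).1 h, h⟩
    have h4 := Finset.card_le_card h3
    rw [Finset.card_union_of_disjoint h2] at h4
    have h5 : (T.filter (fun t => t.1 ∈ S)).card + (T.filter (fun t => t.1 ∉ S)).card = T.card :=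
      Finset.card_filter_add_card_filter_not _
    omega
  -- `x` and `y` are the smaller and the larger of `|J|` and `|B|`
  have key : ∀ x y s f : ℕ, 1 ≤ x → x ≤ y → 2 * s + f + 2 ≤ x + y → x * y ≤ x * s + f → False := by
    intro x y s f hx hxy hs hle
    obtain ⟨d, rfl⟩ : ∃ d, y = s + d := ⟨y - s, by omega⟩
    have h1 : x * d ≤ f := by nlinarith
    rcases Nat.lt_or_ge x 2 with h2 | h2
    · obtain rfl : x = 1 := by omega
      omega
    · have : 2 * d ≤ x * d := Nat.mul_le_mul_right d h2
      omega
  rcases Nat.le_total J.card B.card with h | h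
  · exact key J.card B.card S.card F.card (by omega) h (by omega) (by omega)
  · refine key B.card J.card S.card F.card (by omega) h (by omega) ?_
    rw [Nat.mul_comm B.card J.card]; omega

/-- Completion when no row has exactly one entry: fill the nonempty rows in any order, then the
empty ones. -/
theorem complete_rows {n : ℕ} {T : Finset (ℕ × ℕ × ℕ)} (hT : IsPLS n T)
    (hcard : T.card ≤ n - 1) (htwo : ∀ t ∈ T, ∃ t' ∈ T, t' ≠ t ∧ t'.1 = t.1) :
    ∃ L, IsLatin n L ∧ ∀ i j v, (i, j, v) ∈ T → L i j = v := by
  classical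
  have hN : ∀ S ⊆ T.image (fun t => t.1), ∃ Q, T ⊆ Q ∧ IsPLS n Q ∧ (∀ i ∈ S, RowFull n Q i) ∧
      ∀ t ∈ Q, t.1 ∉ S → t ∈ T := by
    intro S
    induction S using Finset.induction_on with
    | empty => exact fun _ => ⟨T, subset_rfl, hT, by simp, fun t ht _ => ht⟩
    | insert a S haS ih =>
      intro hS
      rw [Finset.insert_subset_iff] at hS
      obtain ⟨Q, hTQ, hQ, hfull, hrest⟩ := ih hS.2
      have htwo' : ∀ i ∈ S, 2 ≤ (T.filter (fun t => t.1 = i)).card := by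
        intro i hi
        obtain ⟨t, ht, rfl⟩ := Finset.mem_image.1 (hS.2 hi)
        obtain ⟨t', ht', hne, he⟩ := htwo t ht
        exact Finset.one_lt_card.2 ⟨t', Finset.mem_filter.2 ⟨ht', he⟩, t,
          Finset.mem_filter.2 ⟨ht, rfl⟩, hne⟩
      have ha : a < n := by
        obtain ⟨⟨i, j, v⟩, ht, rfl⟩ := Finset.mem_image.1 hS.1
        exact (hT.lt _ _ _ ht).1
      obtain ⟨Q', hQQ', hQ', hfull', hrest'⟩ := fill_row hQ ha
        (hall_dense hQ hcard htwo' haS ha hrest)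
      refine ⟨Q', hTQ.trans hQQ', hQ', ?_, ?_⟩
      · intro i hi
        rcases Finset.mem_insert.1 hi with rfl | hi
        · exact hfull'
        · intro j hj
          obtain ⟨v, hv⟩ := hfull i hi j hj
          exact ⟨v, hQQ' hv⟩
      · intro t ht hn
        rw [Finset.mem_insert, not_or] at hn
        exact hrest t (hrest' t ht hn.1) hn.2
  obtain ⟨Q0, hTQ0, hQ0, hfull0, hrest0⟩ := hN _ subset_rfl
  have hE : ∀ D : Finset ℕ, (∀ i ∈ D, i < n) → ∃ Q, T ⊆ Q ∧ IsPLS n Q ∧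
      (∀ i ∈ D ∪ T.image (fun t => t.1), RowFull n Q i) ∧
      ∀ t ∈ Q, t.1 ∈ D ∪ T.image (fun t => t.1) := by
    intro D
    induction D using Finset.induction_on with
    | empty =>
      refine fun _ => ⟨Q0, hTQ0, hQ0, by simpa using hfull0, fun t ht => ?_⟩
      by_contra hn
      rw [Finset.empty_union] at hn
      exact hn (Finset.mem_image.2 ⟨t, hrest0 t ht hn, rfl⟩)
    | insert a D haD ih =>
      intro hD
      obtain ⟨Q, hTQ, hQ, hfull, hrest⟩ := ih (fun i hi => hD i (Finset.mem_insert_of_mem hi))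
      rw [Finset.insert_union]
      by_cases haS : a ∈ D ∪ T.image (fun t => t.1)
      · rw [Finset.insert_eq_of_mem haS]
        exact ⟨Q, hTQ, hQ, hfull, hrest⟩
      have ha := hD a (Finset.mem_insert_self _ _)
      have hSn : ∀ i ∈ D ∪ T.image (fun t => t.1), i < n := by
        intro i hi
        rcases Finset.mem_union.1 hi with hi | hi
        · exact hD i (Finset.mem_insert_of_mem hi)
        · obtain ⟨⟨i, j, v⟩, ht, rfl⟩ := Finset.mem_image.1 hi
          exact (hT.lt _ _ _ ht).1
      obtain ⟨Q', hQQ', hQ', hfull', hrest'⟩ := fill_row hQ ha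
        (fun J hJ => hall_empty hQ haS ha hSn hfull hrest J (fun j hj => (hJ j hj).1))
      refine ⟨Q', hTQ.trans hQQ', hQ', ?_, ?_⟩
      · intro i hi
        rcases Finset.mem_insert.1 hi with rfl | hi
        · exact hfull'
        · intro j hj
          obtain ⟨v, hv⟩ := hfull i hi j hj
          exact ⟨v, hQQ' hv⟩
      · intro t ht
        rw [Finset.mem_insert]
        by_cases h : t.1 = a
        · exact Or.inl h
        · exact Or.inr (hrest t (hrest' t ht h))
  obtain ⟨Q, hTQ, hQ, hfull, -⟩ := hE (Finset.range n) (by simp)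
  have hfull : ∀ i < n, ∀ j < n, ∃ v, (i, j, v) ∈ Q := fun i hi =>
    hfull i (Finset.mem_union_left _ (Finset.mem_range.2 hi))
  choose! L hL using hfull
  refine ⟨L, ⟨?_, ?_, ?_⟩, ?_⟩
  · exact fun i hi j hj => (hQ.lt _ _ _ (hL i hi j hj)).2.2
  · exact fun i hi j hj j' hj' h => hQ.colu i j j' _ (hL i hi j hj) (h ▸ hL i hi j' hj')
  · exact fun j hj i hi i' hi' h => hQ.rowu i i' j _ (hL i hi j hj) (h ▸ hL i' hi' j hj)
  · intro i j v h
    obtain ⟨hi, hj, -⟩ := hT.lt _ _ _ h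
    exact hQ.sym i j _ _ (hL i hi j hj) (hTQ h)

/-- Completion when no symbol occurs exactly once, by exchanging the roles of rows and symbols. -/
theorem complete_repeated {n : ℕ} {T : Finset (ℕ × ℕ × ℕ)} (hT : IsPLS n T)
    (hcard : T.card ≤ n - 1) (htwo : ∀ t ∈ T, ∃ t' ∈ T, t' ≠ t ∧ t'.2.2 = t.2.2) :
    ∃ L, IsLatin n L ∧ ∀ i j v, (i, j, v) ∈ T → L i j = v := by
  classical
  let U := T.image (fun t => (t.2.2, t.2.1, t.1))
  have hU : ∀ i j v, (i, j, v) ∈ U ↔ (v, j, i) ∈ T := by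
    intro i j v
    simp only [U, Finset.mem_image, Prod.exists, Prod.mk.injEq]
    constructor
    · rintro ⟨_, _, _, h, rfl, rfl, rfl⟩; exact h
    · exact fun h => ⟨v, j, i, h, rfl, rfl, rfl⟩
  obtain ⟨M, hM, hMT⟩ := complete_rows (n := n) (T := U)
    ⟨fun i j v h => by
        have := hT.lt _ _ _ ((hU _ _ _).1 h); omega,
      fun i j v v' h h' => hT.rowu _ _ _ _ ((hU _ _ _).1 h) ((hU _ _ _).1 h'),
      fun i j j' v h h' => hT.colu _ _ _ _ ((hU _ _ _).1 h) ((hU _ _ _).1 h'),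
      fun i i' j v h h' => hT.sym _ _ _ _ ((hU _ _ _).1 h) ((hU _ _ _).1 h')⟩
    (Finset.card_image_le.trans hcard) (by
      rintro ⟨i, j, v⟩ h
      obtain ⟨⟨v', j', i'⟩, h', hne, he⟩ := htwo _ ((hU _ _ _).1 h)
      refine ⟨(i', j', v'), (hU _ _ _).2 h', ?_, he⟩
      simp only [ne_eq, Prod.mk.injEq] at hne ⊢
      tauto)
  have hex : ∀ i < n, ∀ j < n, ∃ v, v < n ∧ M v j = i := by
    intro i hi j hj
    obtain ⟨v, hv, h⟩ := Finset.surj_on_of_inj_on_of_card_le (s := Finset.range n)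
      (t := Finset.range n) (fun v _ => M v j)
      (fun v hv => Finset.mem_range.2 (hM.lt v (Finset.mem_range.1 hv) j hj))
      (fun v v' hv hv' h => hM.col j hj v (Finset.mem_range.1 hv) v' (Finset.mem_range.1 hv') h)
      le_rfl i (Finset.mem_range.2 hi)
    exact ⟨v, Finset.mem_range.1 hv, h.symm⟩
  choose! L hLn hLM using hex
  refine ⟨L, ⟨hLn, ?_, ?_⟩, ?_⟩
  · intro i hi j hj j' hj' h
    refine hM.row (L i j) (hLn i hi j hj) j hj j' hj' ?_
    rw [hLM i hi j hj, h, hLM i hi j' hj']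
  · intro j hj i hi i' hi' h
    rw [← hLM i hi j hj, h, hLM i' hi' j hj]
  · intro i j v h
    obtain ⟨hi, hj, hv⟩ := hT.lt _ _ _ h
    refine hM.col j hj _ (hLn i hi j hj) v hv ?_
    rw [hLM i hi j hj, hMT v j i ((hU _ _ _).2 h)]

/-! ### The induction on the order -/

theorem complete_all (n : ℕ) : ∀ T : Finset (ℕ × ℕ × ℕ), IsPLS n T → T.card ≤ n - 1 →
    ∃ L, IsLatin n L ∧ ∀ i j v, (i, j, v) ∈ T → L i j = v := by
  classical
  induction n with
  | zero =>
    intro T hT _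
    exact ⟨fun _ _ => 0, ⟨by omega, by omega, by omega⟩, fun i j v h => by
      have := hT.lt _ _ _ h; omega⟩
  | succ m ih =>
    intro T hT hcard
    by_cases h : ∀ t ∈ T, ∃ t' ∈ T, t' ≠ t ∧ t'.2.2 = t.2.2
    · exact complete_repeated hT hcard h
    push Not at h
    -- The symbol `c` occurs only in cell `(a, b)`; it plays the role of the new symbol `m`.
    obtain ⟨⟨a, b, c⟩, he, huniq⟩ := h
    have hm : 0 < m := by
      have := Finset.card_pos.2 ⟨_, he⟩; omega
    obtain ⟨ρ, σ, hρ, hσ, hρi, hσi, hd, hl⟩ := exists_arrangement (m + 1)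
      (Finset.range (m + 1)) (Finset.range (m + 1)) (T.image (fun t => (t.1, t.2.1))) (a, b)
      (by simp) (by simp)
      (by
        intro p hp
        obtain ⟨⟨i, j, v⟩, ht, rfl⟩ := Finset.mem_image.1 hp
        have := hT.lt _ _ _ ht
        simp only [Finset.mem_range]; omega)
      (Finset.mem_image.2 ⟨_, he, rfl⟩)
      (lt_of_le_of_lt Finset.card_image_le (by omega))
    simp only [Finset.mem_range] at hρ hσ
    have hl : ∀ i j v, (i, j, v) ∈ T.erase (a, b, c) → σ j < ρ i := by
      intro i j v ht
      obtain ⟨hne, htT⟩ := Finset.mem_erase.1 ht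
      refine hl (i, j) (Finset.mem_image.2 ⟨_, htT, rfl⟩) fun h => hne ?_
      simp only [Prod.mk.injEq] at h
      obtain ⟨rfl, rfl⟩ := h
      rw [hT.sym _ _ _ _ htT he]
    have hρi : ∀ i < m + 1, ∀ i' < m + 1, ρ i = ρ i' → i = i' := fun i hi i' hi' h =>
      hρi (by simpa using hi) (by simpa using hi') h
    have hσi : ∀ i < m + 1, ∀ i' < m + 1, σ i = σ i' → i = i' := fun i hi i' hi' h =>
      hσi (by simpa using hi) (by simpa using hi') h
    have hcm := (hT.lt _ _ _ he).2.2
    let τ : Equiv.Perm ℕ := Equiv.swap c m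
    have hτ : ∀ v < m + 1, τ v < m + 1 := by
      intro v hv
      simp only [τ, Equiv.swap_apply_def]; split_ifs <;> omega
    have hττ : ∀ v, τ (τ v) = v := fun v => Equiv.swap_apply_self c m v
    let f : ℕ × ℕ × ℕ → ℕ × ℕ × ℕ := fun t => (ρ t.1 - 1, σ t.2.1, τ t.2.2)
    have hU : ∀ i' j' v', (i', j', v') ∈ (T.erase (a, b, c)).image f → ∃ i j v,
        (i, j, v) ∈ T ∧ i < m + 1 ∧ j < m + 1 ∧ v < m + 1 ∧ v ≠ c ∧ σ j < ρ i ∧ ρ i = i' + 1 ∧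
          σ j = j' ∧ τ v = v' := by
      intro i' j' v' h
      obtain ⟨⟨i, j, v⟩, ht, h⟩ := Finset.mem_image.1 h
      have h1 := hl i j v ht
      obtain ⟨hne, ht⟩ := Finset.mem_erase.1 ht
      obtain ⟨hi, hj, hv⟩ := hT.lt _ _ _ ht
      simp only [f, Prod.mk.injEq] at h
      exact ⟨i, j, v, ht, hi, hj, hv, huniq _ ht hne, h1, by omega, h.2.1, h.2.2⟩
    -- The other cells, moved strictly below the diagonal and then up one row, form a partial
    -- Latin square of order `m`; `v ≠ c` ensures that the symbol `m` does not occur in it.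
    obtain ⟨L, hL, hLU⟩ := ih ((T.erase (a, b, c)).image f)
      ⟨by
        intro i' j' v' h
        obtain ⟨i, j, v, ht, hi, hj, hv, hvc, h1, h2, rfl, rfl⟩ := hU _ _ _ h
        have h3 := hρ i hi
        have h4 := hτ v hv
        have h5 : τ v ≠ m := by
          intro h5
          apply hvc
          rw [← hττ v, h5]; simp [τ]
        omega, by
        intro i' j' v1 v2 h h'
        obtain ⟨i, j, v, ht, hi, hj, hv, -, -, h2, h3, rfl⟩ := hU _ _ _ h
        obtain ⟨k, l, w, ht', hi', hj', hv', -, -, h2', h3', rfl⟩ := hU _ _ _ h'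
        obtain rfl := hρi i hi k hi' (by omega)
        obtain rfl := hσi j hj l hj' (by omega)
        rw [hT.sym _ _ _ _ ht ht'], by
        intro i' j1 j2 v1 h h'
        obtain ⟨i, j, v, ht, hi, hj, hv, -, -, h2, h3, h4⟩ := hU _ _ _ h
        obtain ⟨k, l, w, ht', hi', hj', hv', -, -, h2', h3', h4'⟩ := hU _ _ _ h'
        obtain rfl := hρi i hi k hi' (by omega)
        obtain rfl := τ.injective (h4.trans h4'.symm)
        rw [← h3, ← h3', hT.colu _ _ _ _ ht ht'], by
        intro i1 i2 j' v1 h h'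
        obtain ⟨i, j, v, ht, hi, hj, hv, -, -, h2, h3, h4⟩ := hU _ _ _ h
        obtain ⟨k, l, w, ht', hi', hj', hv', -, -, h2', h3', h4'⟩ := hU _ _ _ h'
        obtain rfl := hσi j hj l hj' (by omega)
        obtain rfl := τ.injective (h4.trans h4'.symm)
        obtain rfl := hT.rowu _ _ _ _ ht ht'
        omega⟩
      (by
        refine Finset.card_image_le.trans ?_
        rw [Finset.card_erase_of_mem he]; omega)
    obtain ⟨G, hG, hGd, hGL⟩ := latin_extend hm hL
    refine ⟨fun i j => τ (G (ρ i) (σ j)), ⟨?_, ?_, ?_⟩, ?_⟩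
    · exact fun i hi j hj => hτ _ (hG.lt _ (hρ i hi) _ (hσ j hj))
    · exact fun i hi j hj j' hj' h => hσi j hj j' hj'
        (hG.row _ (hρ i hi) _ (hσ j hj) _ (hσ j' hj') (τ.injective h))
    · exact fun j hj i hi i' hi' h => hρi i hi i' hi'
        (hG.col _ (hσ j hj) _ (hρ i hi) _ (hρ i' hi') (τ.injective h))
    · intro i j v ht
      by_cases hte : (i, j, v) = (a, b, c)
      · simp only [Prod.mk.injEq] at hte
        obtain ⟨rfl, rfl, rfl⟩ := hte
        have hd : ρ i = σ j := hd
        have := hρ i (hT.lt _ _ _ ht).1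
        simp only [← hd]
        rw [hGd _ (by omega)]; simp [τ]
      · have hte := Finset.mem_erase.2 ⟨hte, ht⟩
        have h1 := hl i j v hte
        have h2 := hρ i (hT.lt _ _ _ ht).1
        have h3 := hLU _ _ _ (Finset.mem_image_of_mem f hte)
        have h4 := hGL (ρ i - 1) (by omega) (σ j) (by omega)
        rw [show ρ i - 1 + 1 = ρ i by omega] at h4
        change τ (G (ρ i) (σ j)) = v
        rw [h4]
        exact (congrArg τ h3).trans (hττ v)

/-- Smetaniuk's theorem (the Evans conjecture): a partial Latin square of
order `n` with at most `n - 1` filled cells can be completed to a Latin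
square of order `n`. -/
theorem smetaniuk (n : ℕ) (P : Fin n → Fin n → Option (Fin n))
    (hrow : ∀ i j j' v, P i j = some v → P i j' = some v → j = j')
    (hcol : ∀ i i' j v, P i j = some v → P i' j = some v → i = i')
    (hcard : (Finset.univ.filter
        (fun p : Fin n × Fin n => (P p.1 p.2).isSome)).card ≤ n - 1) :
    ∃ L : Fin n → Fin n → Fin n,
      (∀ i, Function.Bijective (L i)) ∧
      (∀ j, Function.Bijective (fun i => L i j)) ∧
      (∀ i j v, P i j = some v → L i j = v) := by
  classical
  let T : Finset (ℕ × ℕ × ℕ) := (Finset.univ.filter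
    (fun t : Fin n × Fin n × Fin n => P t.1 t.2.1 = some t.2.2)).image
      (fun t => (t.1.1, t.2.1.1, t.2.2.1))
  have hT : ∀ i j v, (i, j, v) ∈ T → ∃ (i' j' v' : Fin n), P i' j' = some v' ∧ i'.1 = i ∧
      j'.1 = j ∧ v'.1 = v := by
    intro i j v h
    simpa [T] using h
  have hTcard : T.card ≤ n - 1 := by
    refine Finset.card_image_le.trans (le_trans ?_ hcard)
    refine Finset.card_le_card_of_injOn (fun t => (t.1, t.2.1)) ?_ ?_
    · rintro ⟨i, j, v⟩ h
      simp only [Finset.coe_filter, Finset.mem_univ, true_and, Set.mem_ofPred_eq] at h ⊢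
      simp [h]
    · rintro ⟨i, j, v⟩ h ⟨i', j', v'⟩ h' he
      simp only [Finset.coe_filter, Finset.mem_univ, true_and, Set.mem_ofPred_eq,
        Prod.mk.injEq] at h h' he
      obtain ⟨rfl, rfl⟩ := he
      rw [h] at h'
      rw [Option.some.inj h']
  obtain ⟨L, hL, hLT⟩ := complete_all n T ⟨by
      intro i j v h
      obtain ⟨i, j, v, -, rfl, rfl, rfl⟩ := hT _ _ _ h
      exact ⟨i.2, j.2, v.2⟩, by
      intro i j v v' h h'
      obtain ⟨i, j, v, hP, rfl, rfl, rfl⟩ := hT _ _ _ h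
      obtain ⟨k, l, w, hP', h1, h2, rfl⟩ := hT _ _ _ h'
      obtain rfl := Fin.ext h1
      obtain rfl := Fin.ext h2
      rw [hP] at hP'
      rw [Option.some.inj hP'], by
      intro i j j' v h h'
      obtain ⟨i, j, v, hP, rfl, rfl, rfl⟩ := hT _ _ _ h
      obtain ⟨k, l, w, hP', h1, rfl, h2⟩ := hT _ _ _ h'
      obtain rfl := Fin.ext h1
      obtain rfl := Fin.ext h2
      rw [hrow _ _ _ _ hP hP'], by
      intro i i' j v h h'
      obtain ⟨i, j, v, hP, rfl, rfl, rfl⟩ := hT _ _ _ h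
      obtain ⟨k, l, w, hP', rfl, h1, h2⟩ := hT _ _ _ h'
      obtain rfl := Fin.ext h1
      obtain rfl := Fin.ext h2
      rw [hcol _ _ _ _ hP hP']⟩ hTcard
  refine ⟨fun i j => ⟨L i j, hL.lt i i.2 j j.2⟩, fun i => ?_, fun j => ?_, ?_⟩
  · refine Finite.injective_iff_bijective.1 fun j j' h => Fin.ext ?_
    exact hL.row i i.2 j j.2 j' j'.2 (congrArg Fin.val h)
  · refine Finite.injective_iff_bijective.1 fun i i' h => Fin.ext ?_
    exact hL.col j j.2 i i.2 i' i'.2 (congrArg Fin.val h)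
  · intro i j v h
    refine Fin.ext (hLT i j v ?_)
    exact Finset.mem_image.2 ⟨(i, j, v), by simpa using h, rfl⟩
end

section
/- The number of distinct completed 4×4 Sudoku grids (Shidoku) is 288. -/
/-!
Relabelling the symbols by a permutation preserves Shidoku grids, and every grid is, for exactly
one permutation, the relabelling of a grid whose top-left box reads `0 1 / 2 3`. Hence the count is
`4! = 24` times the number of grids normalized in this way.

In a normalized grid the top-right box has rows `{2, 3}` and `{0, 1}` and the bottom-left box has
columns `{1, 3}` and `{0, 2}`, each in one of two orders. A cell of the bottom-right box avoids the
two entries above it and the two to its left, and this either fixes the whole box or leaves some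
cell without a value. So a normalized grid is determined by four binary choices
(`eq_normalGrid`), and 12 of the 16 choices are admissible (`card_admissible`): `24 * 12 = 288`.
-/


/-- A Shidoku grid: a 4×4 Latin square on 4 symbols whose four 2×2 corner
boxes each contain all four symbols. -/
def IsShidoku (L : Fin 4 → Fin 4 → Fin 4) : Prop :=
  (∀ i : Fin 4, Function.Injective (L i)) ∧
  (∀ j : Fin 4, Function.Injective (fun i => L i j)) ∧
  (∀ br bc : Fin 2, ∀ v : Fin 4, ∃ i j : Fin 2,
    L ⟨2 * br.val + i.val, by omega⟩ ⟨2 * bc.val + j.val, by omega⟩ = v)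

/-- A symbol different from `a`, `b`, `c` and `d`, and the junk value `3` if there is none. -/
def missingSymbol (a b c d : Fin 4) : Fin 4 :=
  if 0 ∉ [a, b, c, d] then 0 else
  if 1 ∉ [a, b, c, d] then 1 else
  if 2 ∉ [a, b, c, d] then 2 else 3

/-- The candidate grid with top-left box `0 1 / 2 3`. The four Booleans choose the orders of the two
rows of the top-right box and of the two columns of the bottom-left box; each cell of the
bottom-right box gets a symbol missing above it and to its left. For some choices the result is not
a Shidoku grid. -/
def normalGrid (t : Bool × Bool × Bool × Bool) : Fin 4 → Fin 4 → Fin 4 :=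
  let a := bif t.1 then 2 else 3
  let a' := bif t.1 then 3 else 2
  let b := bif t.2.1 then 0 else 1
  let b' := bif t.2.1 then 1 else 0
  let c := bif t.2.2.1 then 1 else 3
  let c' := bif t.2.2.1 then 3 else 1
  let d := bif t.2.2.2 then 0 else 2
  let d' := bif t.2.2.2 then 2 else 0
  ![![0, 1, a, a'],
    ![2, 3, b, b'],
    ![c, d, missingSymbol a b c d, missingSymbol a' b' c d],
    ![c', d', missingSymbol a b c' d', missingSymbol a' b' c' d']]

instance (L : Fin 4 → Fin 4 → Fin 4) : Decidable (IsShidoku L) := by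
  unfold IsShidoku Function.Injective
  infer_instance

set_option maxRecDepth 100000 in
theorem card_admissible : Fintype.card {t // IsShidoku (normalGrid t)} = 12 := by
  decide +kernel

theorem normalGrid_injective : Function.Injective normalGrid := by
  rintro ⟨a, b, c, d⟩ ⟨a', b', c', d'⟩ h
  have h₁ := congrFun (congrFun h 0) 2
  have h₂ := congrFun (congrFun h 1) 2
  have h₃ := congrFun (congrFun h 2) 0
  have h₄ := congrFun (congrFun h 2) 1
  cases a <;> cases a' <;> cases b <;> cases b' <;> cases c <;> cases c' <;> cases d <;>
    cases d' <;> simp_all [normalGrid]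

/-- The permutation of symbols is recovered from the top-left box alone. -/
theorem perm_eq_of_comp_normalGrid {σ τ : Equiv.Perm (Fin 4)} {s t : Bool × Bool × Bool × Bool}
    (h : ∀ i j, σ (normalGrid s i j) = τ (normalGrid t i j)) : σ = τ := by
  ext1 v
  fin_cases v
  · exact h 0 0
  · exact h 0 1
  · exact h 1 0
  · exact h 1 1

theorem IsShidoku.perm_comp {L : Fin 4 → Fin 4 → Fin 4} (hL : IsShidoku L)
    (σ : Equiv.Perm (Fin 4)) : IsShidoku fun i j => σ (L i j) := by
  obtain ⟨hr, hc, hb⟩ := hL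
  refine ⟨fun i => σ.injective.comp (hr i), fun j => σ.injective.comp (hc j), fun br bc v => ?_⟩
  obtain ⟨i, j, h⟩ := hb br bc (σ.symm v)
  exact ⟨i, j, by simp [h]⟩

/-- The top-left box of a grid, read row by row, is a permutation of the symbols. -/
theorem IsShidoku.bijective_corner {L : Fin 4 → Fin 4 → Fin 4} (hL : IsShidoku L) :
    Function.Bijective ![L 0 0, L 0 1, L 1 0, L 1 1] := by
  refine Function.Surjective.bijective_of_finite fun v => ?_
  obtain ⟨i, j, h⟩ := hL.2.2 0 0 v
  fin_cases i <;> fin_cases j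
  · exact ⟨0, h⟩
  · exact ⟨1, h⟩
  · exact ⟨2, h⟩
  · exact ⟨3, h⟩

set_option synthInstance.maxHeartbeats 400000 in
set_option synthInstance.maxSize 2000 in
/-- If the rest of `normalGrid t` leaves a value for each cell of the bottom-right box, then these
values are the entries of `normalGrid t`. -/
theorem box_eq : ∀ t,
    ∀ w, (w ≠ normalGrid t 0 2 ∧ w ≠ normalGrid t 1 2 ∧
      w ≠ normalGrid t 2 0 ∧ w ≠ normalGrid t 2 1) →
    ∀ x, (x ≠ normalGrid t 0 3 ∧ x ≠ normalGrid t 1 3 ∧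
      x ≠ normalGrid t 2 0 ∧ x ≠ normalGrid t 2 1) →
    ∀ y, (y ≠ normalGrid t 0 2 ∧ y ≠ normalGrid t 1 2 ∧
      y ≠ normalGrid t 3 0 ∧ y ≠ normalGrid t 3 1) →
    ∀ z, (z ≠ normalGrid t 0 3 ∧ z ≠ normalGrid t 1 3 ∧
      z ≠ normalGrid t 3 0 ∧ z ≠ normalGrid t 3 1) →
    w = normalGrid t 2 2 ∧ x = normalGrid t 2 3 ∧
      y = normalGrid t 3 2 ∧ z = normalGrid t 3 3 := by
  decide +kernel

theorem eq_normalGrid {L : Fin 4 → Fin 4 → Fin 4} (hL : IsShidoku L)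
    (h00 : L 0 0 = 0) (h01 : L 0 1 = 1) (h10 : L 1 0 = 2) (h11 : L 1 1 = 3) :
    ∃ t, L = normalGrid t := by
  obtain ⟨hr, hc, -⟩ := hL
  have row : ∀ i j k, j ≠ k → L i j ≠ L i k := fun i j k h e => h (hr i e)
  have col : ∀ j i k, i ≠ k → L i j ≠ L k j := fun j i k h e => h (hc j e)
  have a : (L 0 2 = 2 ∧ L 0 3 = 3) ∨ (L 0 2 = 3 ∧ L 0 3 = 2) := by
    have := row 0 0 2; have := row 0 0 3; have := row 0 1 2; have := row 0 1 3
    have := row 0 2 3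
    grind
  have b : (L 1 2 = 0 ∧ L 1 3 = 1) ∨ (L 1 2 = 1 ∧ L 1 3 = 0) := by
    have := row 1 0 2; have := row 1 0 3; have := row 1 1 2; have := row 1 1 3
    have := row 1 2 3
    grind
  have c : (L 2 0 = 1 ∧ L 3 0 = 3) ∨ (L 2 0 = 3 ∧ L 3 0 = 1) := by
    have := col 0 0 2; have := col 0 0 3; have := col 0 1 2; have := col 0 1 3
    have := col 0 2 3
    grind
  have d : (L 2 1 = 0 ∧ L 3 1 = 2) ∨ (L 2 1 = 2 ∧ L 3 1 = 0) := by
    have := col 1 0 2; have := col 1 0 3; have := col 1 1 2; have := col 1 1 3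
    have := col 1 2 3
    grind
  have avoid : ∀ i j : Fin 4, 2 ≤ i → 2 ≤ j →
      L i j ≠ L 0 j ∧ L i j ≠ L 1 j ∧ L i j ≠ L i 0 ∧ L i j ≠ L i 1 := fun i j hi hj =>
    ⟨col j i 0 (by grind), col j i 1 (by grind), row i j 0 (by grind), row i j 1 (by grind)⟩
  obtain ⟨t, h02, h03, h12, h13, h20, h30, h21, h31⟩ : ∃ t,
      L 0 2 = normalGrid t 0 2 ∧ L 0 3 = normalGrid t 0 3 ∧
      L 1 2 = normalGrid t 1 2 ∧ L 1 3 = normalGrid t 1 3 ∧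
      L 2 0 = normalGrid t 2 0 ∧ L 3 0 = normalGrid t 3 0 ∧
      L 2 1 = normalGrid t 2 1 ∧ L 3 1 = normalGrid t 3 1 := by
    refine ⟨(L 0 2 = 2, L 1 2 = 0, L 2 0 = 1, L 2 1 = 0), ?_⟩
    refine and_assoc.1 ⟨?_, and_assoc.1 ⟨?_, and_assoc.1 ⟨?_, ?_⟩⟩⟩
    · rcases a with ⟨h, h'⟩ | ⟨h, h'⟩ <;> simp [normalGrid, h, h']
    · rcases b with ⟨h, h'⟩ | ⟨h, h'⟩ <;> simp [normalGrid, h, h']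
    · rcases c with ⟨h, h'⟩ | ⟨h, h'⟩ <;> simp [normalGrid, h, h']
    · rcases d with ⟨h, h'⟩ | ⟨h, h'⟩ <;> simp [normalGrid, h, h']
  have e22 := avoid 2 2 (by decide) (by decide)
  have e23 := avoid 2 3 (by decide) (by decide)
  have e32 := avoid 3 2 (by decide) (by decide)
  have e33 := avoid 3 3 (by decide) (by decide)
  rw [h02, h12, h20, h21] at e22
  rw [h03, h13, h20, h21] at e23
  rw [h02, h12, h30, h31] at e32
  rw [h03, h13, h30, h31] at e33
  obtain ⟨h22, h23, h32, h33⟩ := box_eq t _ e22 _ e23 _ e32 _ e33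
  refine ⟨t, funext₂ fun i j => ?_⟩
  fin_cases i <;> fin_cases j <;> assumption

/-- The number of completed 4×4 Sudoku (Shidoku) grids is 288. -/
theorem shidoku_count :
    Nat.card {L : Fin 4 → Fin 4 → Fin 4 // IsShidoku L} = 288 := by
  let F : Equiv.Perm (Fin 4) × {t // IsShidoku (normalGrid t)} →
      {L : Fin 4 → Fin 4 → Fin 4 // IsShidoku L} :=
    fun p => ⟨fun i j => p.1 (normalGrid p.2.1 i j), p.2.2.perm_comp p.1⟩
  have hF : Function.Bijective F := by
    constructor
    · rintro ⟨σ, s, hs⟩ ⟨τ, t, ht⟩ h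
      have h' : ∀ i j, σ (normalGrid s i j) = τ (normalGrid t i j) := fun i j =>
        congrFun (congrFun (congrArg Subtype.val h) i) j
      obtain rfl := perm_eq_of_comp_normalGrid h'
      obtain rfl := normalGrid_injective (funext₂ fun i j => σ.injective (h' i j))
      rfl
    · rintro ⟨L, hL⟩
      let σ : Equiv.Perm (Fin 4) := Equiv.ofBijective _ hL.bijective_corner
      have hM := hL.perm_comp σ.symm
      obtain ⟨t, ht⟩ := eq_normalGrid hM
        (σ.symm_apply_apply 0) (σ.symm_apply_apply 1) (σ.symm_apply_apply 2) (σ.symm_apply_apply 3)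
      refine ⟨(σ, ⟨t, ht ▸ hM⟩), Subtype.ext (funext₂ fun i j => ?_)⟩
      change σ (normalGrid t i j) = L i j
      rw [← ht]
      exact σ.apply_symm_apply (L i j)
  rw [← Nat.card_congr (Equiv.ofBijective F hF), Nat.card_prod, Nat.card_perm,
    Nat.card_eq_fintype_card (α := {t // _}), card_admissible, Nat.card_eq_fintype_card,
    Fintype.card_fin]
  rfl
end
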